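/- arXiv:0805.3259 — 12 statements merged into one kernel-verified Lean document; each statement's English description precedes it below -/
import Mathlib

section
/- Let A = (λ_1, …, λ_n) be a non pyramidal regular configuration in ℤ^d of rank d, and let B be a Gale dual of A with rows b_1, …, b_n (which are all nonzero since A is non pyramidal). Then for any indices i, j, the indices i and j are coparallel if and only if b_i and b_j are parallel, i.e. b_i = α·b_j for some nonzero α ∈ ℚ. -/
/-- for a non pyramidal regular configuration with Gale dual `B`,
indices `i, j` are coparallel iff the Gale rows `b_i, b_j` are parallel. -/
theorem stmt1 (d n : ℕ) (hd : 0 < d) (A : Matrix (Fin d) (Fin n) ℤ)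
    (hreg : ∀ i : Fin n, A ⟨0, hd⟩ i = 1)
    (hrank : (A.map (Int.cast : ℤ → ℚ)).rank = d)
    (hnp : ¬ ∃ (i₀ : Fin n) (l : Fin d → ℚ),
        (∀ i : Fin n, i ≠ i₀ → ∑ r, l r * (A r i : ℚ) = 0) ∧
        ∑ r, l r * (A r i₀ : ℚ) = 1)
    (B : Matrix (Fin n) (Fin (n - d)) ℤ)
    (hBind : ∀ c : Fin (n - d) → ℤ, B.mulVec c = 0 → c = 0)
    (hBspan : ∀ v : Fin n → ℤ, A.mulVec v = 0 ↔ ∃ c : Fin (n - d) → ℤ, v = B.mulVec c)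
    (i j : Fin n) :
    (∀ v : Fin n → ℚ, (A.map (Int.cast : ℤ → ℚ)).mulVec v = 0 → (v i ≠ 0 ↔ v j ≠ 0)) ↔
      ∃ α : ℚ, α ≠ 0 ∧ ∀ t : Fin (n - d), (B i t : ℚ) = α * (B j t : ℚ) := by
  have hcast : ∀ w : Fin n → ℤ, (A.map (Int.cast : ℤ → ℚ)).mulVec (fun k => (w k : ℚ)) =
      fun r => ((A.mulVec w r : ℤ) : ℚ) := by
    intro w
    ext r
    simp [Matrix.mulVec, dotProduct]
  constructor
  · intro h
    have key : ∀ c : Fin (n - d) → ℤ, (B.mulVec c i ≠ 0 ↔ B.mulVec c j ≠ 0) := by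
      intro c
      have h0 : A.mulVec (B.mulVec c) = 0 := (hBspan _).2 ⟨c, rfl⟩
      have h1 := h (fun k => (B.mulVec c k : ℚ)) (by
        rw [hcast, h0]
        ext r
        simp)
      simpa using h1
    have hs : ∀ t, (B i t ≠ 0 ↔ B j t ≠ 0) := by
      intro t
      have := key (Pi.single t 1)
      simpa using this
    by_cases hj : ∀ t, B j t = 0
    · refine ⟨1, one_ne_zero, fun t => ?_⟩
      have h1 : B i t = 0 := by
        by_contra hne
        exact (hs t).1 hne (hj t)
      simp [h1, hj t]
    · push Not at hj
      obtain ⟨s, hsj⟩ := hj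
      have hsi := (hs s).2 hsj
      have hsj' : (B j s : ℚ) ≠ 0 := by exact_mod_cast hsj
      have hsi' : (B i s : ℚ) ≠ 0 := by exact_mod_cast hsi
      refine ⟨(B i s : ℚ) / B j s, div_ne_zero hsi' hsj', fun t => ?_⟩
      have hk := key (Pi.single t (B j s) - Pi.single s (B j t))
      have e : ∀ k, B.mulVec (Pi.single t (B j s) - Pi.single s (B j t)) k =
          B k t * B j s - B k s * B j t := by
        intro k
        simp [Matrix.mulVec, dotProduct_sub]
      rw [e, e] at hk
      have h2 : B i t * B j s - B i s * B j t = 0 := by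
        by_contra hne
        exact hk.1 hne (by ring)
      have h3 : (B i t : ℚ) * B j s - B i s * B j t = 0 := by exact_mod_cast h2
      field_simp
      linarith
  · rintro ⟨α, hα, hB⟩ v hv
    obtain ⟨N, hN⟩ := IsLocalization.exist_integer_multiples_of_finite (nonZeroDivisors ℤ) v
    have hN0 : ((N : ℤ) : ℚ) ≠ 0 := by
      exact_mod_cast nonZeroDivisors.ne_zero N.2
    choose w hw using hN
    have hw' : ∀ k, (w k : ℚ) = ((N : ℤ) : ℚ) * v k := by
      intro k
      simpa using hw k
    have hAw : A.mulVec w = 0 := by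
      have h1 := hcast w
      have h2 : (fun k => (w k : ℚ)) = ((N : ℤ) : ℚ) • v := by
        ext k
        simp [hw']
      rw [h2, Matrix.mulVec_smul, hv, smul_zero] at h1
      ext r
      have := congrFun h1 r
      simp only [Pi.zero_apply] at this ⊢
      exact_mod_cast this.symm
    obtain ⟨c, hc⟩ := (hBspan w).1 hAw
    have h3 : (w i : ℚ) = α * w j := by
      rw [hc]
      simp only [Matrix.mulVec, dotProduct, Int.cast_sum, Int.cast_mul, Finset.mul_sum]
      refine Finset.sum_congr rfl fun t _ => ?_
      rw [hB t]
      ring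
    rw [hw', hw'] at h3
    have h4 : v i = α * v j := by
      apply mul_left_cancel₀ hN0
      rw [h3]
      ring
    rw [h4]
    simp [hα]
end

section
/- Let A = (λ_1, …, λ_n) be a regular configuration in ℤ^d of rank d, and let B be a Gale dual of A with rows b_1, …, b_n. A subset S ⊆ {1, …, n} is a face complement if and only if there exist positive rational numbers r_i (i ∈ S) such that Σ_{i∈S} r_i·b_i = 0. -/
/-- a subset `S` of a regular configuration is a face complement iff there is a
positive rational combination of the Gale rows indexed by `S` summing to zero. -/
theorem stmt2 (d n : ℕ) (hd : 0 < d) (A : Matrix (Fin d) (Fin n) ℤ)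
    (hreg : ∀ i : Fin n, A ⟨0, hd⟩ i = 1)
    (hrank : (A.map (Int.cast : ℤ → ℚ)).rank = d)
    (B : Matrix (Fin n) (Fin (n - d)) ℤ)
    (hBind : ∀ c : Fin (n - d) → ℤ, B.mulVec c = 0 → c = 0)
    (hBspan : ∀ v : Fin n → ℤ, A.mulVec v = 0 ↔ ∃ c : Fin (n - d) → ℤ, v = B.mulVec c)
    (S : Finset (Fin n)) :
    (∃ l : Fin d → ℚ,
        (∀ i ∉ S, ∑ r, l r * (A r i : ℚ) = 0) ∧ ∀ i ∈ S, 0 < ∑ r, l r * (A r i : ℚ)) ↔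
      ∃ c : Fin n → ℚ, (∀ i ∈ S, 0 < c i) ∧
        ∀ t : Fin (n - d), ∑ i ∈ S, c i * (B i t : ℚ) = 0 := by
  have hAB : ∀ r t, ∑ i, A r i * B i t = 0 := by
    intro r t
    have h := (hBspan (B.mulVec (Pi.single t 1))).2 ⟨_, rfl⟩
    have h2 := congrFun h r
    simpa [Matrix.mulVec, dotProduct, Pi.single_apply] using h2
  constructor
  · rintro ⟨l, h0, hpos⟩
    refine ⟨fun i => ∑ r, l r * (A r i : ℚ), hpos, fun t => ?_⟩
    have h1 : ∑ i ∈ S, (∑ r, l r * (A r i : ℚ)) * (B i t : ℚ)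
        = ∑ i, (∑ r, l r * (A r i : ℚ)) * (B i t : ℚ) := by
      apply Finset.sum_subset (Finset.subset_univ S)
      intro i _ hi
      rw [h0 i hi, zero_mul]
    rw [h1]
    simp_rw [Finset.sum_mul]
    rw [Finset.sum_comm]
    apply Finset.sum_eq_zero
    intro r _
    have h2 : (∑ i, (A r i : ℚ) * (B i t : ℚ)) = 0 := by exact_mod_cast hAB r t
    simp_rw [mul_assoc]
    rw [← Finset.mul_sum, h2, mul_zero]
  · rintro ⟨c, hpos, hc⟩
    let w : Fin n → ℚ := fun i => if i ∈ S then c i else 0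
    have hw : ∀ t, ∑ i, w i * (B i t : ℚ) = 0 := by
      intro t
      rw [← hc t]
      simp [w, ite_mul, Finset.sum_ite_mem]
    have hint : ∀ v : Fin n → ℤ, A.mulVec v = 0 → ∑ i, w i * (v i : ℚ) = 0 := by
      intro v hv
      obtain ⟨e, rfl⟩ := (hBspan v).1 hv
      simp only [Matrix.mulVec, dotProduct, Int.cast_sum, Int.cast_mul, Finset.mul_sum]
      rw [Finset.sum_comm]
      apply Finset.sum_eq_zero
      intro t _
      simp_rw [← mul_assoc]
      rw [← Finset.sum_mul, hw t, zero_mul]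
    let M := A.map (Int.cast : ℤ → ℚ)
    have hrat : ∀ v : Fin n → ℚ, M.mulVec v = 0 → ∑ i, w i * v i = 0 := by
      intro v hv
      obtain ⟨b, hb⟩ := IsLocalization.exist_integer_multiples_of_finite (nonZeroDivisors ℤ) v
      choose u hu using hb
      have hb0 : ((b : ℤ) : ℚ) ≠ 0 := by exact_mod_cast nonZeroDivisors.coe_ne_zero b
      have hu' : ∀ i, (u i : ℚ) = ((b : ℤ) : ℚ) * v i := by
        intro i
        have := hu i
        simpa using this
      have hAu : A.mulVec u = 0 := by
        funext r
        have h1 : ∑ i, (A r i : ℚ) * v i = 0 := by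
          simpa [M, Matrix.mulVec, dotProduct] using congrFun hv r
        have h2 : ∑ i, (A r i : ℚ) * (u i : ℚ) = 0 := by
          simp_rw [hu', mul_left_comm]
          rw [← Finset.mul_sum, h1, mul_zero]
        simp only [Matrix.mulVec, dotProduct, Pi.zero_apply]
        exact_mod_cast h2
      have h3 := hint u hAu
      simp_rw [hu', mul_left_comm] at h3
      rw [← Finset.mul_sum] at h3
      exact (mul_eq_zero.1 h3).resolve_left hb0
    let φ : Module.Dual ℚ (Fin n → ℚ) := Fintype.linearCombination ℚ w
    have hφ : φ ∈ LinearMap.range (Matrix.mulVecLin M).dualMap := by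
      rw [LinearMap.range_dualMap_eq_dualAnnihilator_ker, Submodule.mem_dualAnnihilator]
      intro v hv
      have := hrat v (by simpa using hv)
      simpa [φ, Fintype.linearCombination_apply, mul_comm] using this
    obtain ⟨ψ, hψ⟩ := hφ
    have key : ∀ i, ∑ r, ψ (Pi.single r 1) * (A r i : ℚ) = w i := by
      intro i
      have h1 := LinearMap.congr_fun hψ (Pi.single i 1)
      have h2 : φ (Pi.single i 1) = w i := by
        simp [φ, Fintype.linearCombination_apply, Pi.single_apply]
      rw [h2] at h1
      rw [← h1, LinearMap.dualMap_apply, LinearMap.pi_apply_eq_sum_univ ψ]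
      apply Finset.sum_congr rfl
      intro r _
      have h3 : (fun j => if r = j then (1:ℚ) else 0) = Pi.single r 1 := by
        funext j
        simp [Pi.single_apply, eq_comm]
      simp [M, h3, mul_comm]
    refine ⟨fun r => ψ (Pi.single r 1), fun i hi => ?_, fun i hi => ?_⟩
    · rw [key]; simp [w, hi]
    · rw [key]; simpa [w, hi] using hpos i hi
end

section
/- Let A = (λ_1, …, λ_n) be a non pyramidal regular configuration in ℤ^d of rank d, and let B be a Gale dual of A with rows b_1, …, b_n. Let S ⊆ {1, …, n} be a coparallelism class of A. Then S is a face complement if and only if there exist j, k ∈ S such that b_j and b_k are antiparallel, i.e. b_j = α·b_k for some rational α < 0. -/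
theorem aux_dual {d n : ℕ} (A : Matrix (Fin d) (Fin n) ℤ) (w : Fin n → ℚ)
    (hw : ∀ v : Fin n → ℚ, (A.map (Int.cast : ℤ → ℚ)).mulVec v = 0 → ∑ i, w i * v i = 0) :
    ∃ l : Fin d → ℚ, ∀ i, ∑ r, l r * (A r i : ℚ) = w i := by
  classical
  let f := (A.map (Int.cast : ℤ → ℚ)).mulVecLin
  let φ : Module.Dual ℚ (Fin n → ℚ) := Fintype.linearCombination ℚ w
  have hφ : φ ∈ (LinearMap.ker f).dualAnnihilator := by
    rw [Submodule.mem_dualAnnihilator]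
    intro v hv
    have := hw v (by simpa [f] using hv)
    simpa [φ, Fintype.linearCombination_apply, mul_comm] using this
  rw [← LinearMap.range_dualMap_eq_dualAnnihilator_ker] at hφ
  obtain ⟨g, hg⟩ := hφ
  refine ⟨fun r => g (Pi.single r 1), fun i => ?_⟩
  have h1 := congrArg (fun q : Module.Dual ℚ (Fin n → ℚ) => q (Pi.single i 1)) hg
  have h2 : φ (Pi.single i 1) = w i := by
    simp [φ, Fintype.linearCombination_apply, Pi.single_apply]
  have h3 : f (Pi.single i 1) = ∑ r, (A r i : ℚ) • (Pi.single r (1 : ℚ) : Fin d → ℚ) := by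
    ext r
    simp [f, Finset.sum_apply, Pi.single_apply]
  simp only [LinearMap.dualMap_apply, h2, h3, map_sum, map_smul, smul_eq_mul] at h1
  rw [← h1]
  exact Finset.sum_congr rfl fun r _ => mul_comm _ _

theorem aux_clear {n : ℕ} (v : Fin n → ℚ) :
    ∃ (N : ℕ) (u : Fin n → ℤ), 0 < N ∧ ∀ i, (u i : ℚ) = N * v i := by
  refine ⟨∏ i, (v i).den, fun i => (∏ j ∈ Finset.univ.erase i, ((v j).den : ℤ)) * (v i).num,
    Finset.prod_pos fun i _ => (v i).den_pos, fun i => ?_⟩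
  rw [← Finset.mul_prod_erase Finset.univ (fun i => (v i).den) (Finset.mem_univ i)]
  push_cast
  have : ((v i).num : ℚ) = (v i).den * v i := (Rat.den_mul_eq_num (v i)).symm
  rw [this]
  ring

/-- a coparallelism class `S` of a non pyramidal regular configuration is a
face complement iff two of its Gale rows are antiparallel. -/
theorem stmt3 (d n : ℕ) (hd : 0 < d) (A : Matrix (Fin d) (Fin n) ℤ)
    (hreg : ∀ i : Fin n, A ⟨0, hd⟩ i = 1)
    (hrank : (A.map (Int.cast : ℤ → ℚ)).rank = d)
    (hnp : ¬ ∃ (i₀ : Fin n) (l : Fin d → ℚ),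
        (∀ i : Fin n, i ≠ i₀ → ∑ r, l r * (A r i : ℚ) = 0) ∧
        ∑ r, l r * (A r i₀ : ℚ) = 1)
    (B : Matrix (Fin n) (Fin (n - d)) ℤ)
    (hBind : ∀ c : Fin (n - d) → ℤ, B.mulVec c = 0 → c = 0)
    (hBspan : ∀ v : Fin n → ℤ, A.mulVec v = 0 ↔ ∃ c : Fin (n - d) → ℤ, v = B.mulVec c)
    (S : Finset (Fin n)) (hSne : S.Nonempty)
    (hScc : ∀ i ∈ S, ∀ j : Fin n, j ∈ S ↔
      (∀ v : Fin n → ℚ, (A.map (Int.cast : ℤ → ℚ)).mulVec v = 0 → (v i ≠ 0 ↔ v j ≠ 0))) :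
    (∃ l : Fin d → ℚ,
        (∀ i ∉ S, ∑ r, l r * (A r i : ℚ) = 0) ∧ ∀ i ∈ S, 0 < ∑ r, l r * (A r i : ℚ)) ↔
      ∃ j ∈ S, ∃ k ∈ S, ∃ α : ℚ, α < 0 ∧
        ∀ t : Fin (n - d), (B j t : ℚ) = α * (B k t : ℚ) := by
  classical
  have hex : ∀ k : Fin n, ∃ v : Fin n → ℚ,
      (A.map (Int.cast : ℤ → ℚ)).mulVec v = 0 ∧ v k ≠ 0 := by
    intro k
    by_contra! hc
    obtain ⟨l, hl⟩ := aux_dual A (Pi.single k 1) (by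
      intro v hv
      simp [Pi.single_apply, hc v hv])
    exact hnp ⟨k, l, fun i hi => by rw [hl]; simp [hi], by rw [hl]; simp⟩
  have hprop : ∀ k ∈ S, ∀ v0 : Fin n → ℚ, (A.map (Int.cast : ℤ → ℚ)).mulVec v0 = 0 →
      v0 k ≠ 0 → ∀ i ∈ S, v0 i ≠ 0 ∧ ∀ v : Fin n → ℚ,
        (A.map (Int.cast : ℤ → ℚ)).mulVec v = 0 → v i = v0 i / v0 k * v k := by
    intro k hk v0 hv0 hk0 i hi
    have hc := (hScc k hk i).1 hi
    refine ⟨(hc v0 hv0).1 hk0, fun v hv => ?_⟩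
    have h := hc (v - (v k / v0 k) • v0) (by
      rw [Matrix.mulVec_sub, Matrix.mulVec_smul, hv, hv0]; simp)
    have h0 : (v - (v k / v0 k) • v0) k = 0 := by
      simp [hk0]
    have h1 : (v - (v k / v0 k) • v0) i = 0 := by
      by_contra hne
      exact h.2 hne h0
    simp only [Pi.sub_apply, Pi.smul_apply, smul_eq_mul] at h1
    rw [sub_eq_zero.1 h1]
    ring
  have hcol : ∀ t, (A.map (Int.cast : ℤ → ℚ)).mulVec (fun i => (B i t : ℚ)) = 0 := by
    intro t
    have h := (hBspan (B.mulVec (Pi.single t 1))).2 ⟨_, rfl⟩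
    ext r
    rw [Matrix.mulVec_single_one] at h
    have h' := congrFun h r
    simp only [Matrix.mulVec, dotProduct, Matrix.col_apply,
      Pi.zero_apply] at h'
    simp only [Matrix.mulVec, dotProduct, Matrix.map_apply, Pi.zero_apply]
    exact_mod_cast h'
  constructor
  · rintro ⟨l, hl0, hl1⟩
    obtain ⟨k, hk⟩ := hSne
    obtain ⟨v0, hv0, hk0⟩ := hex k
    have hsum : ∑ i ∈ S, (∑ r, l r * (A r i : ℚ)) * v0 i = 0 := by
      rw [Finset.sum_subset (Finset.subset_univ S)
        (fun i _ hi => by rw [hl0 i hi, zero_mul])]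
      have : ∑ r, l r * ((A.map (Int.cast : ℤ → ℚ)).mulVec v0) r = 0 := by simp [hv0]
      rw [← this]
      simp only [Matrix.mulVec, dotProduct, Matrix.map_apply, Finset.mul_sum, Finset.sum_mul]
      rw [Finset.sum_comm]
      simp only [mul_assoc]
    have hneg : ∃ j ∈ S, v0 j / v0 k < 0 := by
      by_contra! hc
      have h2 : ∑ i ∈ S, (∑ r, l r * (A r i : ℚ)) * (v0 i / v0 k) = 0 := by
        simp only [← mul_div_assoc]
        rw [← Finset.sum_div, hsum, zero_div]
      have h3 := (Finset.sum_eq_zero_iff_of_nonneg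
        (fun i hi => mul_nonneg (hl1 i hi).le (hc i hi))).1 h2 k hk
      rw [div_self hk0, mul_one] at h3
      exact (hl1 k hk).ne' h3
    obtain ⟨j, hj, hjn⟩ := hneg
    exact ⟨j, hj, k, hk, v0 j / v0 k, hjn, fun t =>
      (hprop k hk v0 hv0 hk0 j hj).2 _ (hcol t)⟩
  · rintro ⟨j, hj, k, hk, α, hα, hB⟩
    obtain ⟨v, hv, hvk⟩ := hex k
    have hBk : ∃ t, B k t ≠ 0 := by
      by_contra! hc
      obtain ⟨N, u, hN, hu⟩ := aux_clear v
      have hAu : A.mulVec u = 0 := by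
        ext r
        have h := congrFun hv r
        simp only [Matrix.mulVec, dotProduct, Matrix.map_apply, Pi.zero_apply] at h ⊢
        have : ((∑ i, A r i * u i : ℤ) : ℚ) = 0 := by
          push_cast
          simp only [hu]
          rw [← mul_zero (N : ℚ), ← h, Finset.mul_sum]
          exact Finset.sum_congr rfl fun i _ => by ring
        exact_mod_cast this
      obtain ⟨c, hc'⟩ := (hBspan u).1 hAu
      have huk : u k = 0 := by
        rw [hc']
        simp [Matrix.mulVec, dotProduct, hc]
      have := hu k
      rw [huk] at this
      have hN' : (N : ℚ) ≠ 0 := by exact_mod_cast hN.ne'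
      exact mul_ne_zero hN' hvk (by simpa using this.symm)
    obtain ⟨t, ht⟩ := hBk
    have ht' : (B k t : ℚ) ≠ 0 := by exact_mod_cast ht
    obtain ⟨b, hb⟩ : ∃ b : Fin n → ℚ, b = fun i => (B i t : ℚ) := ⟨_, rfl⟩
    have hbker := hcol t
    rw [← hb] at hbker
    have hbk : b k ≠ 0 := by rw [hb]; exact ht'
    have hbj : b j = α * b k := by rw [hb]; exact hB t
    have hP : (S.filter (fun i => 0 < b i)).Nonempty := by
      rcases lt_or_gt_of_ne hbk with h | h
      · exact ⟨j, Finset.mem_filter.2 ⟨hj, by rw [hbj]; exact mul_pos_of_neg_of_neg hα h⟩⟩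
      · exact ⟨k, Finset.mem_filter.2 ⟨hk, h⟩⟩
    have hNn : (S.filter (fun i => ¬ 0 < b i)).Nonempty := by
      rcases lt_or_gt_of_ne hbk with h | h
      · exact ⟨k, Finset.mem_filter.2 ⟨hk, h.le.not_gt⟩⟩
      · exact ⟨j, Finset.mem_filter.2 ⟨hj, by
          rw [hbj]; exact (mul_neg_of_neg_of_pos hα h).le.not_gt⟩⟩
    have hp : (0 : ℚ) < (S.filter (fun i => 0 < b i)).card := by
      exact_mod_cast hP.card_pos
    have hq : (0 : ℚ) < (S.filter (fun i => ¬ 0 < b i)).card := by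
      exact_mod_cast hNn.card_pos
    obtain ⟨p, hpd⟩ : ∃ p : ℚ, p = (S.filter (fun i => 0 < b i)).card := ⟨_, rfl⟩
    obtain ⟨q, hqd⟩ : ∃ q : ℚ, q = (S.filter (fun i => ¬ 0 < b i)).card := ⟨_, rfl⟩
    rw [← hpd] at hp
    rw [← hqd] at hq
    have hbne : ∀ i ∈ S, b i ≠ 0 := fun i hi => (hprop k hk b hbker hbk i hi).1
    let y : Fin n → ℚ := fun i => if 0 < b i then q / b i else - p / b i
    have hy : ∑ i ∈ S, y i * b i = 0 := by
      have h1 : ∀ i ∈ S, y i * b i = if 0 < b i then q else -p := by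
        intro i hi
        have := hbne i hi
        simp only [y]
        split_ifs <;> field_simp
      rw [Finset.sum_congr rfl h1, Finset.sum_ite, Finset.sum_const, Finset.sum_const,
        nsmul_eq_mul, nsmul_eq_mul, ← hpd, ← hqd]
      ring
    obtain ⟨l, hl⟩ := aux_dual A (fun i => if i ∈ S then y i else 0) (by
      intro x hx
      simp only [ite_mul, zero_mul, Finset.sum_ite_mem, Finset.univ_inter]
      have h1 : ∀ i ∈ S, y i * x i = (y i * b i) * (x k / b k) := by
        intro i hi
        rw [(hprop k hk b hbker hbk i hi).2 x hx]
        ring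
      rw [Finset.sum_congr rfl h1, ← Finset.sum_mul, hy, zero_mul])
    refine ⟨l, fun i hi => by rw [hl]; simp [hi], fun i hi => ?_⟩
    rw [hl]
    simp only [hi, if_true, y]
    split_ifs with h
    · exact div_pos hq h
    · exact div_pos_of_neg_of_neg (neg_lt_zero.2 hp) (lt_of_le_of_ne (not_lt.1 h) (hbne i hi))
end

section
/- Let A = (λ_1, …, λ_n) be a regular configuration in ℤ^d of rank d, and let B be a Gale dual of A with rows b_1, …, b_n. For any subset S ⊆ {1, …, n}: Σ_{i∈S} b_i = 0 if and only if there exists ℓ ∈ ℚ^d with ⟨ℓ, λ_i⟩ = 1 for all i ∈ S and ⟨ℓ, λ_i⟩ = 0 for all i ∉ S; that is, the Gale rows indexed by S sum to zero exactly when S is a parallel face complement. -/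
/-- the Gale rows indexed by `S` sum to zero iff `S` is a parallel face
complement of the regular configuration `A`. -/
theorem stmt5 (d n : ℕ) (hd : 0 < d) (A : Matrix (Fin d) (Fin n) ℤ)
    (hreg : ∀ i : Fin n, A ⟨0, hd⟩ i = 1)
    (hrank : (A.map (Int.cast : ℤ → ℚ)).rank = d)
    (B : Matrix (Fin n) (Fin (n - d)) ℤ)
    (hBind : ∀ c : Fin (n - d) → ℤ, B.mulVec c = 0 → c = 0)
    (hBspan : ∀ v : Fin n → ℤ, A.mulVec v = 0 ↔ ∃ c : Fin (n - d) → ℤ, v = B.mulVec c)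
    (S : Finset (Fin n)) :
    (∀ t : Fin (n - d), ∑ i ∈ S, B i t = 0) ↔
      ∃ l : Fin d → ℚ,
        (∀ i ∈ S, ∑ r, l r * (A r i : ℚ) = 1) ∧ ∀ i ∉ S, ∑ r, l r * (A r i : ℚ) = 0 := by
  constructor
  · intro h
    let L : Fin d → (Fin n → ℚ) →ₗ[ℚ] ℚ := fun r => ∑ i, (A r i : ℚ) • LinearMap.proj i
    let K : (Fin n → ℚ) →ₗ[ℚ] ℚ := ∑ i ∈ S, LinearMap.proj i
    have hK : K ∈ Submodule.span ℚ (Set.range L) := by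
      apply mem_span_of_iInf_ker_le_ker
      intro v hv
      have hv' : ∀ r, ∑ i, (A r i : ℚ) * v i = 0 := by
        intro r
        have := (Submodule.mem_iInf _).1 hv r
        simpa [L, LinearMap.sum_apply] using this
      obtain ⟨b, hb⟩ := IsLocalization.exist_integer_multiples_of_finite (nonZeroDivisors ℤ) v
      choose w hw using hb
      have hw' : ∀ i, (w i : ℚ) = ((b : ℤ) : ℚ) * v i := by
        intro i
        have := hw i
        simpa [Submonoid.smul_def] using this
      have hb0 : ((b : ℤ) : ℚ) ≠ 0 := by
        exact_mod_cast nonZeroDivisors.coe_ne_zero b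
      have hAw : A.mulVec w = 0 := by
        funext r
        have : ((∑ i, A r i * w i : ℤ) : ℚ) = 0 := by
          push_cast
          calc ∑ i, (A r i : ℚ) * (w i : ℚ) = ((b : ℤ) : ℚ) * ∑ i, (A r i : ℚ) * v i := by
                rw [Finset.mul_sum]
                refine Finset.sum_congr rfl fun i _ => ?_
                rw [hw']; ring
            _ = 0 := by rw [hv', mul_zero]
        simpa [Matrix.mulVec, dotProduct] using (by exact_mod_cast this : ∑ i, A r i * w i = 0)
      obtain ⟨c, hc⟩ := (hBspan w).1 hAw
      have hsum : ∑ i ∈ S, w i = 0 := by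
        rw [hc]
        simp only [Matrix.mulVec, dotProduct]
        rw [Finset.sum_comm]
        refine Finset.sum_eq_zero fun t _ => ?_
        rw [← Finset.sum_mul, h t, zero_mul]
      have hq : ((b : ℤ) : ℚ) * ∑ i ∈ S, v i = 0 := by
        rw [Finset.mul_sum, ← Finset.sum_congr rfl fun i _ => hw' i]
        exact_mod_cast hsum
      have := (mul_eq_zero.1 hq).resolve_left hb0
      simpa [K, LinearMap.sum_apply] using this
    obtain ⟨l, hl⟩ := (Submodule.mem_span_range_iff_exists_fun ℚ).1 hK
    have key : ∀ i, ∑ r, l r * (A r i : ℚ) = if i ∈ S then 1 else 0 := by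
      intro i
      have := LinearMap.congr_fun hl (Pi.single i 1)
      simpa [L, K, LinearMap.sum_apply, Pi.single_apply] using this
    exact ⟨l, fun i hi => by rw [key, if_pos hi], fun i hi => by rw [key, if_neg hi]⟩
  · rintro ⟨l, h1, h0⟩ t
    have hA := (hBspan (fun i => B i t)).2 ⟨Pi.single t 1, by
      funext i
      simp⟩
    have hA' : ∀ r, ∑ i, (A r i : ℚ) * (B i t : ℚ) = 0 := by
      intro r
      have := congrFun hA r
      simp only [Matrix.mulVec, dotProduct, Pi.zero_apply] at this
      exact_mod_cast this
    have key : ∀ i, ∑ r, l r * (A r i : ℚ) = if i ∈ S then 1 else 0 := by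
      intro i
      by_cases hi : i ∈ S
      · rw [h1 i hi, if_pos hi]
      · rw [h0 i hi, if_neg hi]
    have : ∑ i ∈ S, (B i t : ℚ) = 0 := by
      calc ∑ i ∈ S, (B i t : ℚ) = ∑ i, (∑ r, l r * (A r i : ℚ)) * (B i t : ℚ) := by
            simp [key]
        _ = ∑ r, l r * ∑ i, (A r i : ℚ) * (B i t : ℚ) := by
            simp only [Finset.sum_mul, Finset.mul_sum]
            rw [Finset.sum_comm]
            simp only [mul_assoc]
        _ = 0 := by simp [hA']
    exact_mod_cast this
end

section
/- Let A = (λ_1, …, λ_n) be a non pyramidal regular configuration in ℤ^d of rank d, and let B be a Gale dual of A with rows b_1, …, b_n. Then the following are equivalent: (i) for every 1-dimensional linear subspace L of ℚ^{n−d}, Σ_{i : b_i ∈ L} b_i = 0; (ii) every coparallelism class of A is a parallel face complement. (These are the two combinatorial criteria, of Theorems teo:Bside and teo:Aside respectively, each characterizing self-duality of the projective toric variety X_A.) -/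
open scoped Classical

lemma rowspace_aux {ι κ : Type*} [Fintype ι] [Fintype κ] (M : ι → κ → ℚ) (w : κ → ℚ)
    (h : ∀ v : κ → ℚ, (∀ r, ∑ i, M r i * v i = 0) → ∑ i, w i * v i = 0) :
    ∃ l : ι → ℚ, ∀ i, ∑ r, l r * M r i = w i := by
  have key := mem_span_of_iInf_ker_le_ker (𝕜 := ℚ) (E := κ → ℚ)
    (L := fun r => Fintype.linearCombination ℚ (M r)) (K := Fintype.linearCombination ℚ w) (by
      intro v hv
      simp only [Submodule.mem_iInf, LinearMap.mem_ker, Fintype.linearCombination_apply,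
        smul_eq_mul] at hv ⊢
      have := h v (fun r => by rw [← hv r]; exact Finset.sum_congr rfl fun _ _ => mul_comm _ _)
      rw [← this]; exact Finset.sum_congr rfl fun _ _ => mul_comm _ _)
  rw [Submodule.mem_span_range_iff_exists_fun] at key
  obtain ⟨l, hl⟩ := key
  refine ⟨l, fun i => ?_⟩
  have := LinearMap.congr_fun hl (Pi.single i 1)
  simpa [Fintype.linearCombination_apply, LinearMap.sum_apply, Pi.single_apply] using this

lemma clear_denom {n : ℕ} (v : Fin n → ℚ) :
    ∃ (N : ℤ) (u : Fin n → ℤ), N ≠ 0 ∧ ∀ i, (u i : ℚ) = N * v i := by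
  obtain ⟨b, hb⟩ := IsLocalization.exist_integer_multiples_of_finite (nonZeroDivisors ℤ) v
  choose u hu using hb
  refine ⟨b, u, nonZeroDivisors.coe_ne_zero b, fun i => ?_⟩
  have := hu i
  simpa using this

lemma ker_iff {d n m : ℕ} (A : Matrix (Fin d) (Fin n) ℤ) (B : Matrix (Fin n) (Fin m) ℤ)
    (hBspan : ∀ v : Fin n → ℤ, A.mulVec v = 0 ↔ ∃ c : Fin m → ℤ, v = B.mulVec c)
    (v : Fin n → ℚ) :
    (A.map (Int.cast : ℤ → ℚ)).mulVec v = 0 ↔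
      ∃ c : Fin m → ℚ, ∀ i, v i = ∑ t, (B i t : ℚ) * c t := by
  constructor
  · intro hv
    obtain ⟨N, u, hN, hu⟩ := clear_denom v
    have hN' : (N : ℚ) ≠ 0 := by exact_mod_cast hN
    have hAu : A.mulVec u = 0 := by
      ext r
      have := congrFun hv r
      simp only [Matrix.mulVec, dotProduct, Matrix.map_apply, Pi.zero_apply] at this ⊢
      have h2 : ((∑ i, A r i * u i : ℤ) : ℚ) = N * ∑ i, (A r i : ℚ) * v i := by
        push_cast
        rw [Finset.mul_sum]
        refine Finset.sum_congr rfl fun i _ => ?_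
        rw [hu]; ring
      rw [this, mul_zero] at h2
      exact_mod_cast h2
    obtain ⟨c, hc⟩ := (hBspan u).1 hAu
    refine ⟨fun t => c t / N, fun i => ?_⟩
    have h1 : (u i : ℚ) = ∑ t, (B i t : ℚ) * c t := by
      rw [hc]; simp [Matrix.mulVec, dotProduct]
    rw [hu] at h1
    have : v i = (∑ t, (B i t : ℚ) * c t) / N := by
      rw [← h1]; field_simp
    rw [this, Finset.sum_div]
    exact Finset.sum_congr rfl fun t _ => by ring
  · rintro ⟨c, hc⟩
    have hAB : A * B = 0 := by
      ext r t
      have := congrFun ((hBspan (B.mulVec (Pi.single t 1))).2 ⟨_, rfl⟩) r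
      simpa [Matrix.mul_apply, Matrix.mulVec, dotProduct, Pi.single_apply] using this
    have hv : v = (B.map (Int.cast : ℤ → ℚ)).mulVec c := by
      ext i; rw [hc]; simp [Matrix.mulVec, dotProduct]
    have h3 : A.map (Int.cast : ℤ → ℚ) * B.map (Int.cast : ℤ → ℚ) = 0 := by
      have := Matrix.map_mul (L := A) (M := B) (f := Int.castRingHom ℚ)
      rw [hAB] at this
      simpa using this.symm
    rw [hv, Matrix.mulVec_mulVec, h3, Matrix.zero_mulVec]


/-- for a non pyramidal regular configuration with Gale dual `B`, the line-sum
criterion on the Gale rows (Theorem teo:Bside) holds iff every coparallelism class of `A`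
is a parallel face complement (Theorem teo:Aside). -/
theorem stmt6 (d n : ℕ) (hd : 0 < d) (A : Matrix (Fin d) (Fin n) ℤ)
    (hreg : ∀ i : Fin n, A ⟨0, hd⟩ i = 1)
    (hrank : (A.map (Int.cast : ℤ → ℚ)).rank = d)
    (hnp : ¬ ∃ (i₀ : Fin n) (l : Fin d → ℚ),
        (∀ i : Fin n, i ≠ i₀ → ∑ r, l r * (A r i : ℚ) = 0) ∧
        ∑ r, l r * (A r i₀ : ℚ) = 1)
    (B : Matrix (Fin n) (Fin (n - d)) ℤ)
    (hBind : ∀ c : Fin (n - d) → ℤ, B.mulVec c = 0 → c = 0)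
    (hBspan : ∀ v : Fin n → ℤ, A.mulVec v = 0 ↔ ∃ c : Fin (n - d) → ℤ, v = B.mulVec c) :
    (∀ L : Submodule ℚ (Fin (n - d) → ℚ), Module.finrank ℚ L = 1 →
        ∑ i ∈ Finset.univ.filter (fun i : Fin n => (fun t => (B i t : ℚ)) ∈ L),
          (fun t => (B i t : ℚ)) = (0 : Fin (n - d) → ℚ)) ↔
      ∀ i : Fin n, ∃ l : Fin d → ℚ,
        (∀ j : Fin n,
          (∀ v : Fin n → ℚ, (A.map (Int.cast : ℤ → ℚ)).mulVec v = 0 → (v i ≠ 0 ↔ v j ≠ 0)) →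
            ∑ r, l r * (A r j : ℚ) = 1) ∧
        (∀ j : Fin n,
          ¬ (∀ v : Fin n → ℚ, (A.map (Int.cast : ℤ → ℚ)).mulVec v = 0 → (v i ≠ 0 ↔ v j ≠ 0)) →
            ∑ r, l r * (A r j : ℚ) = 0) := by
  have hker := ker_iff A B hBspan
  set b : Fin n → Fin (n - d) → ℚ := fun i t => (B i t : ℚ) with hb
  -- row space criterion
  have hrow : ∀ w : Fin n → ℚ, (∃ l : Fin d → ℚ, ∀ i, ∑ r, l r * (A r i : ℚ) = w i) ↔
      ∑ i, w i • b i = 0 := by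
    intro w
    constructor
    · rintro ⟨l, hl⟩
      ext t
      have h0 := (hker (fun i => (B i t : ℚ))).2 ⟨Pi.single t 1, fun i => by
        simp [Pi.single_apply]⟩
      simp only [Finset.sum_apply, Pi.smul_apply, smul_eq_mul, Pi.zero_apply, ← hl, hb]
      simp_rw [Finset.sum_mul]
      rw [Finset.sum_comm]
      refine Finset.sum_eq_zero fun r _ => ?_
      have := congrFun h0 r
      simp only [Matrix.mulVec, dotProduct, Matrix.map_apply, Pi.zero_apply] at this
      simp_rw [mul_assoc]
      rw [← Finset.mul_sum, this, mul_zero]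
    · intro hw
      refine rowspace_aux (fun r i => (A r i : ℚ)) w fun v hv => ?_
      obtain ⟨c, hc⟩ := (hker v).1 (by ext r; simpa [Matrix.mulVec, dotProduct] using hv r)
      simp_rw [hc, Finset.mul_sum]
      rw [Finset.sum_comm]
      refine Finset.sum_eq_zero fun t _ => ?_
      have := congrFun hw t
      simp only [Finset.sum_apply, Pi.smul_apply, smul_eq_mul, Pi.zero_apply, hb] at this
      simp_rw [← mul_assoc]
      rw [← Finset.sum_mul, this, zero_mul]
  have hb0 : ∀ i, b i ≠ 0 := by
    intro i hi
    obtain ⟨l, hl⟩ := (hrow (Pi.single i 1)).2 (by simp [Pi.single_apply, ite_smul, hi])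
    exact hnp ⟨i, l, fun j hj => by rw [hl, Pi.single_eq_of_ne hj],
      by rw [hl, Pi.single_eq_same]⟩
  have hcop : ∀ i j, (∀ v : Fin n → ℚ, (A.map (Int.cast : ℤ → ℚ)).mulVec v = 0 →
      (v i ≠ 0 ↔ v j ≠ 0)) ↔ b j ∈ Submodule.span ℚ {b i} := by
    intro i j
    rw [Submodule.mem_span_singleton]
    constructor
    · intro h
      obtain ⟨l, hl⟩ := rowspace_aux (ι := Unit) (fun _ => b i) (b j) (fun c hc => by
        have := h (fun k => ∑ t, (B k t : ℚ) * c t) ((hker _).2 ⟨c, fun _ => rfl⟩)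
        exact (not_iff_not.1 this).1 (hc ()))
      exact ⟨l (), by ext t; simpa using hl t⟩
    · rintro ⟨a, ha⟩ v hv
      obtain ⟨c, hc⟩ := (hker v).1 hv
      have ha0 : a ≠ 0 := by
        rintro rfl
        exact hb0 j (by rw [← ha, zero_smul])
      have : v j = a * v i := by
        rw [hc, hc, Finset.mul_sum]
        refine Finset.sum_congr rfl fun t _ => ?_
        have := congrFun ha t
        simp only [hb, Pi.smul_apply, smul_eq_mul] at this
        rw [← this]; ring
      rw [this]
      simp [ha0]
  have hsum : ∀ L : Submodule ℚ (Fin (n - d) → ℚ),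
      ∑ i ∈ Finset.univ.filter (fun i : Fin n => b i ∈ L), b i = 0 ↔
      ∃ l : Fin d → ℚ, ∀ i, ∑ r, l r * (A r i : ℚ) = if b i ∈ L then 1 else 0 := by
    intro L
    rw [hrow, Finset.sum_filter]
    simp only [ite_smul, one_smul, zero_smul]
  change (∀ L : Submodule ℚ (Fin (n - d) → ℚ), Module.finrank ℚ L = 1 →
      ∑ i ∈ Finset.univ.filter (fun i : Fin n => b i ∈ L), b i = 0) ↔ _
  simp only [hcop]
  constructor
  · intro h i
    obtain ⟨l, hl⟩ := (hsum _).1 (h (Submodule.span ℚ {b i}) (finrank_span_singleton (hb0 i)))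
    exact ⟨l, fun j hj => by rw [hl, if_pos hj], fun j hj => by rw [hl, if_neg hj]⟩
  · intro h L hL
    by_cases hex : ∃ i, b i ∈ L
    · obtain ⟨i, hi⟩ := hex
      have hLe : Submodule.span ℚ {b i} = L := by
        refine Submodule.eq_of_le_of_finrank_eq ?_ ?_
        · simpa [Submodule.span_le] using hi
        · rw [hL, finrank_span_singleton (hb0 i)]
      obtain ⟨l, h1, h2⟩ := h i
      rw [hLe] at h1 h2
      refine (hsum L).2 ⟨l, fun j => ?_⟩
      split_ifs with hj
      · exact h1 j hj
      · exact h2 j hj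
    · push Not at hex
      exact Finset.sum_eq_zero fun i hi => absurd (Finset.mem_filter.1 hi).2 (hex i)
end

section
/- Let A = (λ_1, …, λ_n) be a non pyramidal regular configuration in ℤ^d of rank d, and let B be a Gale dual of A with rows b_1, …, b_n. Then the following are equivalent: (i) for every v ∈ ker_ℚ(A), the indicator vector of the set {i : v_i = 0} lies in the row span of A over ℚ; (ii) for every 1-dimensional linear subspace L of ℚ^{n−d}, Σ_{i : b_i ∈ L} b_i = 0. (Condition (i) is, by the tropical characterization of Dickenstein–Feichtner–Sturmfels, equivalent to dim X_A = dim X_A*, so this equivalence is the combinatorial content of Theorem teo:Bside characterizing self-dual toric varieties.) -/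
open scoped Classical

/-- for a non pyramidal regular configuration with Gale dual `B`: the indicator
vector of the zero set of every rational relation lies in the row span of `A` iff the
line-sum criterion holds for the Gale rows. -/
theorem stmt8 (d n : ℕ) (hd : 0 < d) (A : Matrix (Fin d) (Fin n) ℤ)
    (hreg : ∀ i : Fin n, A ⟨0, hd⟩ i = 1)
    (hrank : (A.map (Int.cast : ℤ → ℚ)).rank = d)
    (hnp : ¬ ∃ (i₀ : Fin n) (l : Fin d → ℚ),
        (∀ i : Fin n, i ≠ i₀ → ∑ r, l r * (A r i : ℚ) = 0) ∧
        ∑ r, l r * (A r i₀ : ℚ) = 1)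
    (B : Matrix (Fin n) (Fin (n - d)) ℤ)
    (hBind : ∀ c : Fin (n - d) → ℤ, B.mulVec c = 0 → c = 0)
    (hBspan : ∀ v : Fin n → ℤ, A.mulVec v = 0 ↔ ∃ c : Fin (n - d) → ℤ, v = B.mulVec c) :
    (∀ v : Fin n → ℚ, (A.map (Int.cast : ℤ → ℚ)).mulVec v = 0 →
        ∃ l : Fin d → ℚ, ∀ i : Fin n,
          (if v i = 0 then (1 : ℚ) else 0) = ∑ r, l r * (A r i : ℚ)) ↔
      ∀ L : Submodule ℚ (Fin (n - d) → ℚ), Module.finrank ℚ L = 1 →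
        ∑ i ∈ Finset.univ.filter (fun i : Fin n => (fun t => (B i t : ℚ)) ∈ L),
          (fun t => (B i t : ℚ)) = (0 : Fin (n - d) → ℚ) := by
  obtain ⟨b, hb⟩ : ∃ b : Fin n → (Fin (n - d) → ℚ), ∀ i, (fun t => (B i t : ℚ)) = b i :=
    ⟨fun i t => (B i t : ℚ), fun _ => rfl⟩
  simp only [hb]
  have hAB : ∀ r t, ∑ i, A r i * B i t = 0 := by
    intro r t
    have h := congrFun ((hBspan (B.mulVec (Pi.single t 1))).2 ⟨_, rfl⟩) r
    simpa [Matrix.mulVec, dotProduct, Pi.single_apply] using h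
  have hker : ∀ v : Fin n → ℚ, (A.map (Int.cast : ℤ → ℚ)).mulVec v = 0 ↔
      ∃ f : Module.Dual ℚ (Fin (n - d) → ℚ), ∀ i, v i = f (b i) := by
    intro v
    constructor
    · intro hv
      obtain ⟨D, hD⟩ := IsLocalization.exist_integer_multiples_of_finite (nonZeroDivisors ℤ) v
      choose w hw using hD
      have hD0 : ((D : ℤ) : ℚ) ≠ 0 := by
        have := nonZeroDivisors.coe_ne_zero D
        exact_mod_cast this
      have hw' : ∀ i, (w i : ℚ) = (D : ℤ) * v i := by
        intro i
        have := hw i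
        simpa using this
      have hAw : A.mulVec w = 0 := by
        ext r
        have h := congrFun hv r
        simp only [Matrix.mulVec, dotProduct, Matrix.map_apply, Pi.zero_apply] at h ⊢
        have h2 : ((∑ i, A r i * w i : ℤ) : ℚ) = 0 := by
          push_cast
          simp only [hw']
          calc _ = ((D : ℤ) : ℚ) * ∑ i, (A r i : ℚ) * v i := by
                rw [Finset.mul_sum]
                exact Finset.sum_congr rfl fun i _ => by ring
            _ = 0 := by rw [h, mul_zero]
        exact_mod_cast h2
      obtain ⟨c, hc⟩ := (hBspan w).1 hAw
      refine ⟨∑ t, ((c t : ℚ) / (D : ℤ)) • LinearMap.proj t, fun i => ?_⟩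
      have h1 : (w i : ℚ) = ∑ t, (B i t : ℚ) * c t := by
        rw [hc]
        simp [Matrix.mulVec, dotProduct]
      have h3 : v i = (∑ t, (B i t : ℚ) * c t) / (D : ℤ) := by
        rw [← h1, hw']
        field_simp
      rw [h3, ← hb, Finset.sum_div]
      simp only [LinearMap.sum_apply, LinearMap.smul_apply, LinearMap.proj_apply, smul_eq_mul]
      exact Finset.sum_congr rfl fun i _ => by ring
    · rintro ⟨f, hf⟩
      ext r
      simp only [Matrix.mulVec, dotProduct, Matrix.map_apply, Pi.zero_apply, hf]
      have : ∑ i, (A r i : ℚ) • b i = 0 := by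
        ext t
        simp only [← hb, Finset.sum_apply, Pi.smul_apply, smul_eq_mul, Pi.zero_apply]
        exact_mod_cast hAB r t
      simpa using congrArg f this
  have hspan : ∀ (S : Fin n → Prop) [DecidablePred S],
      (∃ l : Fin d → ℚ, ∀ i, (if S i then (1 : ℚ) else 0) = ∑ r, l r * (A r i : ℚ)) ↔
      ∑ i ∈ Finset.univ.filter S, b i = 0 := by
    intro S _
    constructor
    · rintro ⟨l, hl⟩
      ext t
      have h := (hker (fun i => b i t)).2 ⟨LinearMap.proj t, fun i => rfl⟩
      have h' : ∀ r, ∑ i, (A r i : ℚ) * b i t = 0 := fun r => by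
        simpa [Matrix.mulVec, dotProduct] using congrFun h r
      rw [Finset.sum_apply, Finset.sum_filter, Pi.zero_apply]
      calc _ = ∑ i, (if S i then (1 : ℚ) else 0) * b i t := by simp
        _ = ∑ i, ∑ r, l r * ((A r i : ℚ) * b i t) := by
          refine Finset.sum_congr rfl fun i _ => ?_
          rw [hl, Finset.sum_mul]
          exact Finset.sum_congr rfl fun r _ => by ring
        _ = 0 := by
          rw [Finset.sum_comm]
          simp [← Finset.mul_sum, h']
    · intro h
      have hm : (∑ i ∈ Finset.univ.filter S, LinearMap.proj i : (Fin n → ℚ) →ₗ[ℚ] ℚ) ∈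
          Submodule.span ℚ (Set.range fun r : Fin d =>
            (∑ i, (A r i : ℚ) • LinearMap.proj i : (Fin n → ℚ) →ₗ[ℚ] ℚ)) := by
        apply mem_span_of_iInf_ker_le_ker
        intro x hx
        have hx' : (A.map (Int.cast : ℤ → ℚ)).mulVec x = 0 := by
          ext r
          have := (Submodule.mem_iInf _).1 hx r
          simpa [Matrix.mulVec, dotProduct] using this
        obtain ⟨f, hf⟩ := (hker x).1 hx'
        have := congrArg f h
        simpa [hf] using this
      obtain ⟨l, hl⟩ := (Submodule.mem_span_range_iff_exists_fun ℚ).1 hm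
      refine ⟨l, fun i => ?_⟩
      have := LinearMap.congr_fun hl (Pi.single i 1)
      simpa [Pi.single_apply, Finset.sum_ite_eq, eq_comm] using this.symm
  constructor
  · intro H L _
    obtain ⟨f, hfL, hf⟩ := Module.Dual.exists_forall_mem_ne_zero_of_forall_exists
      L.dualAnnihilator (fun i : {i // b i ∉ L} => Module.Dual.eval ℚ _ (b i)) (by
        rintro ⟨i, hi⟩
        by_contra! hc
        exact hi ((Subspace.forall_mem_dualAnnihilator_apply_eq_zero_iff L (b i)).1 hc))
    have h := (hspan _).1 (H (fun i => f (b i)) ((hker _).2 ⟨f, fun _ => rfl⟩))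
    rw [← h]
    refine Finset.sum_congr (Finset.filter_congr fun i _ => ?_) fun _ _ => rfl
    constructor
    · exact fun hi => (Submodule.mem_dualAnnihilator f).1 hfL _ hi
    · intro h0
      by_contra hi
      exact hf ⟨i, hi⟩ h0
  · intro H v hv
    obtain ⟨f, hf⟩ := (hker v).1 hv
    refine (hspan _).2 ?_
    rw [← Finset.sum_filter_ne_zero,
      ← Finset.sum_fiberwise_of_maps_to (g := fun i => Submodule.span ℚ {b i})
        (fun i hi => Finset.mem_image_of_mem (fun i => Submodule.span ℚ {b i}) hi)]
    refine Finset.sum_eq_zero fun L hL => ?_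
    obtain ⟨j, hj, rfl⟩ := Finset.mem_image.1 hL
    simp only [Finset.mem_filter, Finset.mem_univ, true_and] at hj
    refine Eq.trans ?_ (H (Submodule.span ℚ {b j}) (finrank_span_singleton hj.2))
    refine Finset.sum_subset_zero_on_sdiff ?_ ?_ fun _ _ => rfl
    · intro i hi
      simp only [Finset.mem_filter, Finset.mem_univ, true_and] at hi ⊢
      rw [← hi.2]
      exact Submodule.mem_span_singleton_self _
    · intro i hi
      simp only [Finset.mem_sdiff, Finset.mem_filter, Finset.mem_univ, true_and] at hi
      by_contra h0
      obtain ⟨a, ha⟩ := Submodule.mem_span_singleton.1 hi.1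
      have ha0 : a ≠ 0 := by
        rintro rfl
        exact h0 (by rw [← ha, zero_smul])
      refine hi.2 ⟨⟨?_, h0⟩, ?_⟩
      · rw [hf, ← ha, map_smul, ← hf, hj.1, smul_zero]
      · rw [← ha]
        exact Submodule.span_singleton_smul_eq (IsUnit.mk0 a ha0) _
end

section
/- Let A = (λ_1, …, λ_n) be a non pyramidal regular configuration in ℤ^d of rank d whose points λ_1, …, λ_n are pairwise distinct, with n ≥ d + 2 (i.e. the toric variety X_A has codimension greater than 1), and suppose every coparallelism class of A is a parallel face complement (the self-duality criterion). Then no point λ_i lies in the relative (intrinsic) interior of the convex hull Conv(A) ⊆ ℝ^d, and every proper (exposed) face F of Conv(A) contains at most one point λ_i in its relative interior. -/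
lemma relint_max {d : ℕ} {F : Set (Fin d → ℝ)} {x y : Fin d → ℝ}
    (hx : x ∈ intrinsicInterior ℝ F) (hy : y ∈ F) (f : (Fin d → ℝ) →ₗ[ℝ] ℝ)
    (hmax : ∀ z ∈ F, f z ≤ f x) : f y = f x := by
  obtain ⟨z, hz, rfl⟩ := mem_intrinsicInterior.1 hx
  have hyS : y ∈ affineSpan ℝ F := subset_affineSpan ℝ F hy
  let g : ℝ → affineSpan ℝ F := fun t =>
    ⟨AffineMap.lineMap (z : Fin d → ℝ) y t, AffineMap.lineMap_mem t z.2 hyS⟩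
  have hg : Continuous g := by
    apply Continuous.subtype_mk
    exact AffineMap.lineMap_continuous
  have hg0 : g 0 = z := by
    apply Subtype.ext
    simp [g]
  have hnh : g ⁻¹' ((↑) ⁻¹' F : Set (affineSpan ℝ F)) ∈ nhds (0 : ℝ) := by
    apply hg.continuousAt
    rw [hg0]
    exact mem_interior_iff_mem_nhds.1 hz
  obtain ⟨e, he, hball⟩ := Metric.mem_nhds_iff.1 hnh
  have hm : (-(e/2)) ∈ Metric.ball (0 : ℝ) e := by
    simp only [Metric.mem_ball, dist_zero_right, norm_neg, Real.norm_eq_abs]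
    rw [abs_of_pos (by linarith)]; linarith
  have h1 := hmax _ (hball hm)
  have h2 : f (g (-(e/2)) : Fin d → ℝ) = f z + (-(e/2)) * (f y - f z) := by
    simp only [g, AffineMap.lineMap_apply_module']
    simp [add_comm]
  rw [h2] at h1
  have h3 := hmax y hy
  apply le_antisymm h3
  by_contra hc
  nlinarith

lemma key {d n : ℕ} (A : Matrix (Fin d) (Fin n) ℤ) (l : Fin d → ℚ) (i j : Fin n)
    {F : Set (Fin d → ℝ)}
    (hF : F ⊆ convexHull ℝ (Set.range fun i : Fin n => fun r => (A r i : ℝ)))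
    (hi : (fun r => (A r i : ℝ)) ∈ intrinsicInterior ℝ F)
    (hj : (fun r => (A r j : ℝ)) ∈ F)
    (hmax : ∀ k, ∑ r, l r * (A r k : ℚ) ≤ ∑ r, l r * (A r i : ℚ)) :
    ∑ r, l r * (A r j : ℚ) = ∑ r, l r * (A r i : ℚ) := by
  let f : (Fin d → ℝ) →ₗ[ℝ] ℝ := ∑ r, (l r : ℝ) • LinearMap.proj r
  have hf : ∀ k, f (fun r => (A r k : ℝ)) = ((∑ r, l r * (A r k : ℚ) : ℚ) : ℝ) := by
    intro k
    simp [f]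
  have := relint_max hi hj f (by
    intro z hz
    have hs : convexHull ℝ (Set.range fun i : Fin n => fun r => (A r i : ℝ)) ⊆
        {z | f z ≤ f (fun r => (A r i : ℝ))} := by
      apply convexHull_min
      · rintro _ ⟨k, rfl⟩
        simp only [Set.mem_setOf_eq]
        rw [hf, hf]
        exact_mod_cast hmax k
      · exact convex_halfSpace_le f.isLinear _
    exact hs (hF hz))
  rw [hf, hf] at this
  exact_mod_cast this

lemma rowspace {d n : ℕ} (B : Matrix (Fin d) (Fin n) ℚ) (c : Fin n → ℚ)
    (h : ∀ v, B.mulVec v = 0 → ∑ k, c k * v k = 0) :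
    ∃ l : Fin d → ℚ, ∀ k, ∑ r, l r * B r k = c k := by
  let φ : Module.Dual ℚ (Fin n → ℚ) := ∑ k, c k • LinearMap.proj k
  have hφ : φ ∈ LinearMap.range (B.mulVecLin.dualMap) := by
    rw [LinearMap.range_dualMap_eq_dualAnnihilator_ker, Submodule.mem_dualAnnihilator]
    intro v hv
    have := h v (by simpa using hv)
    simpa [φ] using this
  obtain ⟨ψ, hψ⟩ := hφ
  refine ⟨fun r => ψ (Pi.single r 1), fun k => ?_⟩
  have h1 := congrArg (fun g => g (Pi.single k 1)) hψ
  have h2 : φ (Pi.single k 1) = c k := by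
    simp [φ, Pi.single_apply]
  have h3 : ψ (B.mulVec (Pi.single k 1)) = c k := by
    rw [← h2]; exact h1
  rw [← h3, Matrix.mulVec_single_one, LinearMap.pi_apply_eq_sum_univ ψ (B.col k)]
  apply Finset.sum_congr rfl
  intro r _
  have h4 : (Pi.single r 1 : Fin d → ℚ) = fun j => if r = j then 1 else 0 := by
    ext s
    simp [Pi.single_apply, eq_comm]
  rw [smul_eq_mul, mul_comm, ← h4]
  rfl


/-- a non pyramidal regular configuration with pairwise distinct points, of
codimension `> 1`, satisfying the self-duality criterion, has no point in the relative
interior of its convex hull, and every proper exposed face of the convex hull contains at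
most one point of the configuration in its relative interior. -/
theorem stmt10 (d n : ℕ) (hd : 0 < d) (A : Matrix (Fin d) (Fin n) ℤ)
    (hreg : ∀ i : Fin n, A ⟨0, hd⟩ i = 1)
    (hrank : (A.map (Int.cast : ℤ → ℚ)).rank = d)
    (hnp : ¬ ∃ (i₀ : Fin n) (l : Fin d → ℚ),
        (∀ i : Fin n, i ≠ i₀ → ∑ r, l r * (A r i : ℚ) = 0) ∧
        ∑ r, l r * (A r i₀ : ℚ) = 1)
    (hdist : ∀ i j : Fin n, (∀ r : Fin d, A r i = A r j) → i = j)
    (hn : d + 2 ≤ n)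
    (hsd : ∀ i : Fin n, ∃ l : Fin d → ℚ,
      (∀ j : Fin n,
        (∀ v : Fin n → ℚ, (A.map (Int.cast : ℤ → ℚ)).mulVec v = 0 → (v i ≠ 0 ↔ v j ≠ 0)) →
          ∑ r, l r * (A r j : ℚ) = 1) ∧
      (∀ j : Fin n,
        ¬ (∀ v : Fin n → ℚ, (A.map (Int.cast : ℤ → ℚ)).mulVec v = 0 → (v i ≠ 0 ↔ v j ≠ 0)) →
          ∑ r, l r * (A r j : ℚ) = 0)) :
    (∀ i : Fin n, (fun r => (A r i : ℝ)) ∉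
        intrinsicInterior ℝ (convexHull ℝ (Set.range fun i : Fin n => fun r => (A r i : ℝ)))) ∧
    ∀ F : Set (Fin d → ℝ),
      IsExposed ℝ (convexHull ℝ (Set.range fun i : Fin n => fun r => (A r i : ℝ))) F →
      F ≠ convexHull ℝ (Set.range fun i : Fin n => fun r => (A r i : ℝ)) →
      ∀ i j : Fin n, (fun r => (A r i : ℝ)) ∈ intrinsicInterior ℝ F →
        (fun r => (A r j : ℝ)) ∈ intrinsicInterior ℝ F → i = j := by
  constructor
  · intro i hi
    by_cases hall : ∀ j : Fin n, ∀ v : Fin n → ℚ,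
        (A.map (Int.cast : ℤ → ℚ)).mulVec v = 0 → (v i ≠ 0 ↔ v j ≠ 0)
    · let g : (Fin n → ℚ) →ₗ[ℚ] (Fin d → ℚ) × ℚ :=
        (A.map (Int.cast : ℤ → ℚ)).mulVecLin.prod (LinearMap.proj i)
      have hg : Function.Injective g := by
        rw [← LinearMap.ker_eq_bot, LinearMap.ker_eq_bot']
        intro v hv
        have h1 : (A.map (Int.cast : ℤ → ℚ)).mulVec v = 0 := congrArg Prod.fst hv
        have h2 : v i = 0 := congrArg Prod.snd hv
        ext j
        by_contra hj
        exact (hall j v h1).2 hj h2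
      have := LinearMap.finrank_le_finrank_of_injective hg
      simp at this
      omega
    · push Not at hall
      obtain ⟨j, v, hv, hne⟩ := hall
      obtain ⟨l, h1, h0⟩ := hsd j
      have hnc : ¬ (∀ v : Fin n → ℚ, (A.map (Int.cast : ℤ → ℚ)).mulVec v = 0 →
          (v j ≠ 0 ↔ v i ≠ 0)) := by
        intro h
        have := h v hv
        tauto
      have hi0 := h0 i hnc
      have hj1 := h1 j (fun _ _ => Iff.rfl)
      have := key A (-l) i j subset_rfl hi (subset_convexHull ℝ _ ⟨j, rfl⟩) (by
        intro k
        simp only [Pi.neg_apply, neg_mul, Finset.sum_neg_distrib, hi0]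
        by_cases hk : ∀ v : Fin n → ℚ, (A.map (Int.cast : ℤ → ℚ)).mulVec v = 0 →
          (v j ≠ 0 ↔ v k ≠ 0)
        · rw [h1 k hk]; norm_num
        · rw [h0 k hk])
      simp only [Pi.neg_apply, neg_mul, Finset.sum_neg_distrib, hi0, hj1] at this
      norm_num at this
  · intro F hexp _ i j hi hj
    have hF := hexp.subset
    by_contra hij
    by_cases hc : ∀ v : Fin n → ℚ, (A.map (Int.cast : ℤ → ℚ)).mulVec v = 0 →
          (v i ≠ 0 ↔ v j ≠ 0)
    · -- coparallel case
      have hex : ∃ v : Fin n → ℚ, (A.map (Int.cast : ℤ → ℚ)).mulVec v = 0 ∧ v i ≠ 0 := by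
        by_contra hno
        push Not at hno
        obtain ⟨l, hl⟩ := rowspace (A.map (Int.cast : ℤ → ℚ)) (Pi.single i 1) (by
          intro v hv
          simpa [Pi.single_apply] using hno v hv)
        refine hnp ⟨i, l, fun k hk => ?_, ?_⟩
        · simpa [hk] using hl k
        · simpa using hl i
      obtain ⟨v, hv, hvi⟩ := hex
      have hvj := (hc v hv).1 hvi
      obtain ⟨l, hl⟩ := rowspace (A.map (Int.cast : ℤ → ℚ))
          (Pi.single i (v j) + Pi.single j (-(v i))) (by
        intro w hw
        have hu : (A.map (Int.cast : ℤ → ℚ)).mulVec (w i • v - v i • w) = 0 := by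
          rw [Matrix.mulVec_sub, Matrix.mulVec_smul, Matrix.mulVec_smul, hv, hw]; simp
        have h1 := (not_congr (hc _ hu)).1 (by simp [mul_comm])
        simp only [Pi.sub_apply, Pi.smul_apply, smul_eq_mul, not_not] at h1
        simp [Pi.single_apply, add_mul, Finset.sum_add_distrib]
        linarith)
      simp only [Matrix.map_apply] at hl
      have hfin : ∀ (i j : Fin n) (l : Fin d → ℚ) (p q : ℚ), i ≠ j →
          (fun r => (A r i : ℝ)) ∈ intrinsicInterior ℝ F →
          (fun r => (A r j : ℝ)) ∈ intrinsicInterior ℝ F →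
          (∀ k, ∑ r, l r * (A r k : ℚ) = (Pi.single i p + Pi.single j q : Fin n → ℚ) k) →
          0 < p → q ≤ p → False := by
        intro i j l p q hij hi hj hl hp hqp
        have hli : ∑ r, l r * (A r i : ℚ) = p := by rw [hl]; simp [hij]
        have hlj : ∑ r, l r * (A r j : ℚ) = q := by rw [hl]; simp [Ne.symm hij]
        have hlk : ∀ k, k ≠ i → k ≠ j → ∑ r, l r * (A r k : ℚ) = 0 := by
          intro k h1 h2; rw [hl]; simp [h1, h2]
        -- a coordinate functional separating the points
        obtain ⟨r₀, hr₀⟩ : ∃ r, A r i ≠ A r j := by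
          by_contra h
          push Not at h
          exact hij (hdist i j h)
        obtain ⟨s, hs⟩ : ∃ s : ℚ, s * (A r₀ j : ℚ) < s * (A r₀ i : ℚ) := by
          rcases lt_or_gt_of_ne hr₀ with h | h
          · refine ⟨-1, ?_⟩
            have : (A r₀ i : ℚ) < A r₀ j := by exact_mod_cast h
            linarith
          · refine ⟨1, ?_⟩
            have : (A r₀ j : ℚ) < A r₀ i := by exact_mod_cast h
            linarith
        let M : ℚ := ∑ k, |s * (A r₀ k : ℚ) - s * (A r₀ i : ℚ)|
        have hM0 : 0 ≤ M := Finset.sum_nonneg fun _ _ => abs_nonneg _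
        have hM : ∀ k, s * (A r₀ k : ℚ) - s * (A r₀ i : ℚ) ≤ M := fun k =>
          (le_abs_self _).trans (Finset.single_le_sum
            (f := fun k => |s * (A r₀ k : ℚ) - s * (A r₀ i : ℚ)|)
            (fun _ _ => abs_nonneg _) (Finset.mem_univ k))
        let l' : Fin d → ℚ := fun r => (M / p) * l r + (Pi.single r₀ s : Fin d → ℚ) r
        have hl' : ∀ k, ∑ r, l' r * (A r k : ℚ)
            = (M / p) * (∑ r, l r * (A r k : ℚ)) + s * (A r₀ k : ℚ) := by
          intro k
          simp [l', add_mul, Finset.sum_add_distrib, Finset.mul_sum, mul_assoc, Pi.single_apply]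
        have hMp : M / p * p = M := by field_simp
        have hMq : M / p * q ≤ M := by
          calc M / p * q ≤ M / p * p := mul_le_mul_of_nonneg_left hqp (by positivity)
            _ = M := hMp
        have := key A l' i j hF hi (intrinsicInterior_subset hj) (by
          intro k
          rw [hl', hl', hli, hMp]
          by_cases h1 : k = i
          · subst h1; rw [hli, hMp]
          by_cases h2 : k = j
          · subst h2; rw [hlj]; linarith
          rw [hlk k h1 h2]
          have := hM k
          linarith)
        rw [hl', hl', hli, hlj, hMp] at this
        linarith
      have hneg : ∀ k, ∑ r, (-l) r * (A r k : ℚ)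
          = (Pi.single i (-(v j)) + Pi.single j (v i) : Fin n → ℚ) k := by
        intro k
        simp only [Pi.neg_apply, neg_mul, Finset.sum_neg_distrib, hl k, Pi.add_apply,
          Pi.single_neg]
        ring
      have hji : j ≠ i := Ne.symm hij
      rcases le_total (-(v i)) (v j) with h | h
      · rcases lt_or_gt_of_ne hvj with h' | h'
        · exact hfin j i (-l) (v i) (-(v j)) hji hj hi
            (fun k => by rw [hneg k, add_comm]) (by linarith) (by linarith)
        · exact hfin i j l _ _ hij hi hj hl h' h
      · rcases lt_or_gt_of_ne hvi with h' | h'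
        · exact hfin j i l (-(v i)) (v j) hji hj hi
            (fun k => by rw [hl k, add_comm]) (by linarith) (by linarith)
        · exact hfin i j (-l) (-(v j)) (v i) hij hi hj hneg (by linarith) (by linarith)
    · obtain ⟨l, h1, h0⟩ := hsd i
      have hi1 := h1 i (fun _ _ => Iff.rfl)
      have hj0 := h0 j hc
      have := key A l i j hF hi (intrinsicInterior_subset hj) (by
        intro k
        rw [hi1]
        by_cases hk : ∀ v : Fin n → ℚ, (A.map (Int.cast : ℤ → ℚ)).mulVec v = 0 →
          (v i ≠ 0 ↔ v k ≠ 0)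
        · rw [h1 k hk]
        · rw [h0 k hk]; norm_num)
      rw [hi1, hj0] at this
      norm_num at this
end

section
/- Let A = (λ_1, …, λ_n) be a non pyramidal regular configuration in ℤ^d of rank d whose Gale dual B (with rows b_1, …, b_n) satisfies: for every 1-dimensional linear subspace L of ℚ^{n−d}, Σ_{i : b_i ∈ L} b_i = 0 (the self-duality criterion). Let S ⊆ {1, …, n} be nonempty and suppose the subconfiguration A_S = (λ_i)_{i∈S} is non pyramidal. Then: (a) any Gale dual B_S of A_S (with rows b'_i, i ∈ S) also satisfies the criterion, i.e. for every 1-dimensional linear subspace L' of the corresponding space, Σ_{i : b'_i ∈ L'} b'_i = 0; and (b) S is facial: there exists ℓ ∈ ℚ^d with ⟨ℓ, λ_i⟩ = 0 for all i ∈ S and ⟨ℓ, λ_i⟩ > 0 for all i ∉ S. -/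
open scoped Classical

lemma aux_dual_s11 {d : ℕ} {ι : Type} [Fintype ι] (M : Matrix (Fin d) ι ℤ) (f : ι → ℚ)
    (h : ∀ v : ι → ℤ, M.mulVec v = 0 → ∑ i, f i * (v i : ℚ) = 0) :
    ∃ l : Fin d → ℚ, ∀ i, ∑ r, l r * (M r i : ℚ) = f i := by
  let L : Fin d → ((ι → ℚ) →ₗ[ℚ] ℚ) := fun r => ∑ i, (M r i : ℚ) • LinearMap.proj i
  let K : (ι → ℚ) →ₗ[ℚ] ℚ := ∑ i, f i • LinearMap.proj i
  have hL : ∀ r v, L r v = ∑ i, (M r i : ℚ) * v i := by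
    intro r v; simp [L, LinearMap.sum_apply]
  have hK : ∀ v, K v = ∑ i, f i * v i := by
    intro v; simp [K, LinearMap.sum_apply]
  have hmem : K ∈ Submodule.span ℚ (Set.range L) := by
    apply mem_span_of_iInf_ker_le_ker
    intro v hv
    simp only [Submodule.mem_iInf, LinearMap.mem_ker] at hv ⊢
    obtain ⟨b, hb⟩ := IsLocalization.exist_integer_multiples_of_finite (nonZeroDivisors ℤ) v
    choose w hw using hb
    have hb0 : ((b : ℤ) : ℚ) ≠ 0 := by
      have := nonZeroDivisors.coe_ne_zero b
      exact_mod_cast this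
    have hw' : ∀ i, (w i : ℚ) = (b : ℤ) * v i := by
      intro i
      have := hw i
      simpa using this
    have h1 : M.mulVec w = 0 := by
      funext r
      have h2 := hv r
      rw [hL] at h2
      have : ((M.mulVec w r : ℤ) : ℚ) = 0 := by
        simp only [Matrix.mulVec, dotProduct]
        push_cast
        simp only [hw']
        calc _ = ((b : ℤ) : ℚ) * ∑ i, (M r i : ℚ) * v i := by
              rw [Finset.mul_sum]; exact Finset.sum_congr rfl fun i _ => by ring
          _ = 0 := by rw [h2, mul_zero]
      exact_mod_cast this
    have h3 := h w h1
    simp only [hw'] at h3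
    rw [hK]
    have : ((b : ℤ) : ℚ) * ∑ i, f i * v i = 0 := by
      rw [← h3, Finset.mul_sum]; exact Finset.sum_congr rfl fun i _ => by ring
    exact (mul_eq_zero.mp this).resolve_left hb0
  obtain ⟨l, hl⟩ := (Submodule.mem_span_range_iff_exists_fun ℚ).1 hmem
  refine ⟨l, fun i => ?_⟩
  have := LinearMap.congr_fun hl (Pi.single i 1)
  rw [hK, LinearMap.sum_apply] at this
  simp only [LinearMap.smul_apply, hL] at this
  simpa [Pi.single_apply] using this

lemma aux_sum {n k : ℕ} (b : Fin n → Fin k → ℚ)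
    (hsd : ∀ L : Submodule ℚ (Fin k → ℚ), Module.finrank ℚ L = 1 →
      ∑ i ∈ Finset.univ.filter (fun i : Fin n => b i ∈ L), b i = 0)
    (T : Finset (Fin n))
    (hT : ∀ i ∈ T, ∀ j, ∀ c : ℚ, c ≠ 0 → b j = c • b i → j ∈ T) :
    ∑ i ∈ T, b i = 0 := by
  have h0 : ∑ i ∈ T, b i = ∑ i ∈ T.filter (fun i => b i ≠ 0), b i := by
    rw [Finset.sum_filter_ne_zero]
  rw [h0, ← Finset.sum_fiberwise_of_maps_to
    (g := fun i => Submodule.span ℚ {b i})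
    (t := (T.filter (fun i => b i ≠ 0)).image (fun i => Submodule.span ℚ {b i}))
    (fun i hi => Finset.mem_image_of_mem _ hi)]
  apply Finset.sum_eq_zero
  intro L hL
  obtain ⟨i, hi, rfl⟩ := Finset.mem_image.1 hL
  obtain ⟨hiT, hi0⟩ := Finset.mem_filter.1 hi
  refine Eq.trans ?_ (hsd (Submodule.span ℚ {b i}) (finrank_span_singleton hi0))
  apply Finset.sum_subset
  · intro j hj
    obtain ⟨_, hj2⟩ := Finset.mem_filter.1 hj
    refine Finset.mem_filter.2 ⟨Finset.mem_univ _, ?_⟩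
    rw [← hj2]
    exact Submodule.mem_span_singleton_self _
  · intro j hj hj'
    by_contra hne
    apply hj'
    obtain ⟨c, hc⟩ := Submodule.mem_span_singleton.1 (Finset.mem_filter.1 hj).2
    have hc0 : c ≠ 0 := by
      rintro rfl
      exact hne (by rw [← hc, zero_smul])
    refine Finset.mem_filter.2 ⟨Finset.mem_filter.2 ⟨hT i hiT j c hc0 hc.symm, hne⟩, ?_⟩
    change Submodule.span ℚ {b j} = _
    rw [← hc]
    exact Submodule.span_singleton_smul_eq (IsUnit.mk0 c hc0) _

/-- a non pyramidal subconfiguration of a self-dual non pyramidal regular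
configuration again satisfies the self-duality (line-sum) criterion on any of its Gale
duals, and it is a facial subset. -/
theorem stmt11 (d n : ℕ) (hd : 0 < d) (A : Matrix (Fin d) (Fin n) ℤ)
    (hreg : ∀ i : Fin n, A ⟨0, hd⟩ i = 1)
    (hrank : (A.map (Int.cast : ℤ → ℚ)).rank = d)
    (hnp : ¬ ∃ (i₀ : Fin n) (l : Fin d → ℚ),
        (∀ i : Fin n, i ≠ i₀ → ∑ r, l r * (A r i : ℚ) = 0) ∧
        ∑ r, l r * (A r i₀ : ℚ) = 1)
    (B : Matrix (Fin n) (Fin (n - d)) ℤ)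
    (hBind : ∀ c : Fin (n - d) → ℤ, B.mulVec c = 0 → c = 0)
    (hBspan : ∀ v : Fin n → ℤ, A.mulVec v = 0 ↔ ∃ c : Fin (n - d) → ℤ, v = B.mulVec c)
    (hsd : ∀ L : Submodule ℚ (Fin (n - d) → ℚ), Module.finrank ℚ L = 1 →
      ∑ i ∈ Finset.univ.filter (fun i : Fin n => (fun t => (B i t : ℚ)) ∈ L),
        (fun t => (B i t : ℚ)) = (0 : Fin (n - d) → ℚ))
    (S : Finset (Fin n)) (hSne : S.Nonempty)
    (hSnp : ¬ ∃ (i₀ : {i // i ∈ S}) (l : Fin d → ℚ),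
        (∀ i : {i // i ∈ S}, i ≠ i₀ → ∑ r, l r * (A r i.1 : ℚ) = 0) ∧
        ∑ r, l r * (A r i₀.1 : ℚ) = 1)
    (m' : ℕ) (BS : Matrix {i // i ∈ S} (Fin m') ℤ)
    (hBSind : ∀ c : Fin m' → ℤ, BS.mulVec c = 0 → c = 0)
    (hBSspan : ∀ v : {i // i ∈ S} → ℤ,
      (Matrix.of fun (r : Fin d) (i : {i // i ∈ S}) => A r i.1).mulVec v = 0 ↔
        ∃ c : Fin m' → ℤ, v = BS.mulVec c) :
    (∀ L' : Submodule ℚ (Fin m' → ℚ), Module.finrank ℚ L' = 1 →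
      ∑ i ∈ Finset.univ.filter (fun i : {i // i ∈ S} => (fun t => (BS i t : ℚ)) ∈ L'),
        (fun t => (BS i t : ℚ)) = (0 : Fin m' → ℚ)) ∧
    ∃ l : Fin d → ℚ,
      (∀ i ∈ S, ∑ r, l r * (A r i : ℚ) = 0) ∧ ∀ i ∉ S, 0 < ∑ r, l r * (A r i : ℚ) := by
  let b : Fin n → Fin (n - d) → ℚ := fun i t => (B i t : ℚ)
  have hBx : ∀ (x : Fin (n - d) → ℤ) i, ((B.mulVec x i : ℤ) : ℚ) = ∑ t, b i t * (x t : ℚ) := by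
    intro x i
    simp [Matrix.mulVec, dotProduct, b]
  have hscale : ∀ (x : Fin (n - d) → ℤ) i j (c : ℚ), b j = c • b i →
      ((B.mulVec x j : ℤ) : ℚ) = c * ((B.mulVec x i : ℤ) : ℚ) := by
    intro x i j c h
    rw [hBx, hBx, h, Finset.mul_sum]
    exact Finset.sum_congr rfl fun t _ => by simp [mul_assoc]
  have hext : ∀ v : {i // i ∈ S} → ℤ,
      (Matrix.of fun (r : Fin d) (i : {i // i ∈ S}) => A r i.1).mulVec v = 0 →
      ∃ x : Fin (n - d) → ℤ, ∀ i, B.mulVec x i = if h : i ∈ S then v ⟨i, h⟩ else 0 := by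
    intro v hv
    obtain ⟨x, hx⟩ := (hBspan (fun i => if h : i ∈ S then v ⟨i, h⟩ else 0)).1 (by
      rw [← hv]
      funext r
      simp only [Matrix.mulVec, dotProduct, Matrix.of_apply]
      have h1 : ∑ i : {i // i ∈ S}, A r i.1 * v i
          = ∑ i ∈ S.attach, A r i.1 * (if h : i.1 ∈ S then v ⟨i.1, h⟩ else 0) := by
        rw [Finset.univ_eq_attach]
        exact Finset.sum_congr rfl fun i _ => by simp
      rw [h1, Finset.sum_attach S (fun i => A r i * (if h : i ∈ S then v ⟨i, h⟩ else 0))]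
      symm
      apply Finset.sum_subset (Finset.subset_univ _)
      intro i _ hi
      simp [hi])
    exact ⟨x, fun i => (congrFun hx i).symm⟩
  have hSclosed : ∀ i ∈ S, ∀ j, ∀ c : ℚ, c ≠ 0 → b j = c • b i → j ∈ S := by
    intro i hi j c hc hj
    by_contra hjS
    apply hSnp
    obtain ⟨l, hl⟩ := aux_dual_s11 (Matrix.of fun (r : Fin d) (i : {i // i ∈ S}) => A r i.1)
      (fun k => if k = ⟨i, hi⟩ then 1 else 0) (by
        intro v hv
        obtain ⟨x, hx⟩ := hext v hv
        have h1 := hscale x i j c hj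
        rw [hx j, hx i, dif_neg hjS, dif_pos hi] at h1
        have h2 : (v ⟨i, hi⟩ : ℚ) = 0 := by
          have : c * (v ⟨i, hi⟩ : ℚ) = 0 := by rw [← h1]; simp
          exact (mul_eq_zero.mp this).resolve_left hc
        simp [ite_mul, h2])
    refine ⟨⟨i, hi⟩, l, fun k hk => ?_, ?_⟩
    · simpa [hk] using hl k
    · simpa using hl ⟨i, hi⟩
  constructor
  · intro L' _
    have hcol : ∀ t, ∃ x : Fin (n - d) → ℤ, ∀ i : {i // i ∈ S}, BS i t = B.mulVec x i.1 := by
      intro t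
      obtain ⟨x, hx⟩ := hext (BS.mulVec (Pi.single t 1)) ((hBSspan _).2 ⟨_, rfl⟩)
      refine ⟨x, fun i => ?_⟩
      rw [hx, dif_pos i.2]
      simp
    choose X hX using hcol
    have hT := aux_sum b hsd (Finset.univ.filter (fun i : Fin n =>
      ∃ h : i ∈ S, (fun t => (BS ⟨i, h⟩ t : ℚ)) ∈ L')) (by
        intro i hi j c hc hj
        obtain ⟨hiS, hiL⟩ := (Finset.mem_filter.1 hi).2
        have hjS := hSclosed i hiS j c hc hj
        refine Finset.mem_filter.2 ⟨Finset.mem_univ _, hjS, ?_⟩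
        have : (fun t => (BS ⟨j, hjS⟩ t : ℚ)) = c • (fun t => (BS ⟨i, hiS⟩ t : ℚ)) := by
          funext t
          simp only [Pi.smul_apply, smul_eq_mul, hX]
          exact hscale _ _ _ _ hj
        rw [this]
        exact L'.smul_mem _ hiL)
    funext t
    rw [Finset.sum_apply]
    simp only [hX]
    have h1 : ∑ i ∈ Finset.univ.filter (fun i : Fin n =>
      ∃ h : i ∈ S, (fun t => (BS ⟨i, h⟩ t : ℚ)) ∈ L'), ((B.mulVec (X t) i : ℤ) : ℚ) = 0 := by
      simp only [hBx]
      rw [Finset.sum_comm]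
      apply Finset.sum_eq_zero
      intro s _
      rw [← Finset.sum_mul]
      have := congrFun hT s
      rw [Finset.sum_apply] at this
      rw [this]; simp
    rw [Pi.zero_apply, ← h1]
    refine Finset.sum_bij (fun i _ => i.1) ?_ ?_ ?_ ?_
    · intro i hi
      have := (Finset.mem_filter.1 hi).2
      simp only [← hX] at this
      exact Finset.mem_filter.2 ⟨Finset.mem_univ _, i.2, this⟩
    · intro i _ j _ h
      exact Subtype.ext h
    · intro i hi
      obtain ⟨hiS, hiL⟩ := (Finset.mem_filter.1 hi).2
      refine ⟨⟨i, hiS⟩, Finset.mem_filter.2 ⟨Finset.mem_univ _, ?_⟩, rfl⟩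
      simpa only [hX] using hiL
    · intro i _
      rfl
  · have hT := aux_sum b hsd Sᶜ (by
      intro i hi j c hc hj
      rw [Finset.mem_compl] at hi ⊢
      intro hjS
      exact hi (hSclosed j hjS i c⁻¹ (inv_ne_zero hc) (by rw [hj, smul_smul, inv_mul_cancel₀ hc, one_smul])))
    obtain ⟨l, hl⟩ := aux_dual_s11 A (fun k => if k ∈ Sᶜ then 1 else 0) (by
      intro v hv
      obtain ⟨x, rfl⟩ := (hBspan v).1 hv
      simp only [ite_mul, one_mul, zero_mul]
      rw [← Finset.sum_filter, Finset.filter_mem_eq_inter, Finset.univ_inter]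
      simp only [hBx]
      rw [Finset.sum_comm]
      apply Finset.sum_eq_zero
      intro s _
      rw [← Finset.sum_mul]
      have := congrFun hT s
      rw [Finset.sum_apply] at this
      rw [this]; simp)
    refine ⟨l, fun i hi => ?_, fun i hi => ?_⟩
    · rw [hl]; simp [hi]
    · rw [hl]; simp [hi]
end

section
/- Let M ∈ ℤ^{d×n} and let Λ(M) ∈ ℤ^{(n+d)×2n} be the Lawrence matrix [[Id_n, Id_n],[0, M]]. Then: (i) ker_ℤ(Λ(M)) = {(−v, v) : v ∈ ℤ^n, Mv = 0}; and (ii) any Gale dual B of Λ(M), with rows b_1, …, b_{2n}, satisfies b_{n+j} = −b_j for all j = 1, …, n, and consequently satisfies the line-sum condition: for every 1-dimensional linear subspace L of the column space, Σ_{i : b_i ∈ L} b_i = 0. (By Theorem teo:Bside, this proves Corollary 5.2: the toric variety of any non pyramidal Lawrence configuration is self-dual.) -/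
open scoped Classical

/-- the integer kernel of the Lawrence matrix `[[Id, Id],[0, M]]` consists of
the vectors `(-v, v)` with `Mv = 0`, and any Gale dual `B` of the Lawrence configuration has
opposite rows `b_{n+j} = -b_j`, hence satisfies the line-sum criterion. -/
theorem stmt12 (d n : ℕ) (M : Matrix (Fin d) (Fin n) ℤ)
    (m : ℕ) (B : Matrix (Fin n ⊕ Fin n) (Fin m) ℤ)
    (hBind : ∀ c : Fin m → ℤ, B.mulVec c = 0 → c = 0)
    (hBspan : ∀ v : (Fin n ⊕ Fin n) → ℤ,
      (Matrix.fromBlocks (1 : Matrix (Fin n) (Fin n) ℤ) (1 : Matrix (Fin n) (Fin n) ℤ)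
          (0 : Matrix (Fin d) (Fin n) ℤ) M).mulVec v = 0 ↔
        ∃ c : Fin m → ℤ, v = B.mulVec c) :
    (∀ v : (Fin n ⊕ Fin n) → ℤ,
      (Matrix.fromBlocks (1 : Matrix (Fin n) (Fin n) ℤ) (1 : Matrix (Fin n) (Fin n) ℤ)
          (0 : Matrix (Fin d) (Fin n) ℤ) M).mulVec v = 0 ↔
        ∃ w : Fin n → ℤ, M.mulVec w = 0 ∧ v = Sum.elim (fun j => - w j) w) ∧
    (∀ (j : Fin n) (t : Fin m), B (Sum.inr j) t = - B (Sum.inl j) t) ∧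
    (∀ L : Submodule ℚ (Fin m → ℚ), Module.finrank ℚ L = 1 →
      ∑ i ∈ Finset.univ.filter (fun i : Fin n ⊕ Fin n => (fun t => (B i t : ℚ)) ∈ L),
        (fun t => (B i t : ℚ)) = (0 : Fin m → ℚ)) := by
  have key : ∀ v : (Fin n ⊕ Fin n) → ℤ,
      (Matrix.fromBlocks (1 : Matrix (Fin n) (Fin n) ℤ) (1 : Matrix (Fin n) (Fin n) ℤ)
          (0 : Matrix (Fin d) (Fin n) ℤ) M).mulVec v = 0 ↔
        ∃ w : Fin n → ℤ, M.mulVec w = 0 ∧ v = Sum.elim (fun j => - w j) w := by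
    intro v
    rw [Matrix.fromBlocks_mulVec]
    simp only [Matrix.one_mulVec, Matrix.zero_mulVec, zero_add]
    constructor
    · intro h
      refine ⟨v ∘ Sum.inr, ?_, ?_⟩
      · funext i
        exact congrFun h (Sum.inr i)
      · funext i
        rcases i with i | i
        · have h1 := congrFun h (Sum.inl i)
          simp only [Sum.elim_inl, Pi.add_apply, Function.comp_apply, Pi.zero_apply] at h1 ⊢
          linarith
        · rfl
    · rintro ⟨w, hw, rfl⟩
      funext i
      rcases i with i | i
      · simp
      · exact congrFun hw i
  have opp : ∀ (j : Fin n) (t : Fin m), B (Sum.inr j) t = - B (Sum.inl j) t := by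
    intro j t
    obtain ⟨w, -, hw⟩ := (key _).1 ((hBspan (B.mulVec (Pi.single t 1))).2 ⟨_, rfl⟩)
    have h1 := congrFun hw (Sum.inl j)
    have h2 := congrFun hw (Sum.inr j)
    simp at h1 h2
    rw [h1, h2, neg_neg]
  refine ⟨key, opp, ?_⟩
  intro L _
  have hr : ∀ j : Fin n, (fun t => (B (Sum.inr j) t : ℚ)) = -(fun t => (B (Sum.inl j) t : ℚ)) := by
    intro j
    funext t
    simp [opp]
  rw [Finset.sum_filter, Fintype.sum_sum_type, ← Finset.sum_add_distrib]
  apply Finset.sum_eq_zero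
  intro j _
  rw [hr j]
  simp only [Submodule.neg_mem_iff]
  split_ifs <;> simp
end

section
/- Let m ≥ 2 and let A' ∈ ℤ^{(m+1)×2m} be the matrix [[Id_m, Id_m],[0 ⋯ 0, 1 ⋯ 1]] (the weight matrix of the Segre embedding of ℙ¹ × ℙ^{m−1} in ℙ^{2m−1}). A matrix B ∈ ℤ^{2m×(m−1)} with rows b_1, …, b_{2m} ∈ ℤ^{m−1} has its columns forming a ℤ-basis of ker_ℤ(A') if and only if: b_{m+j} = −b_j for all j = 1, …, m, b_1 + ⋯ + b_m = 0, and (b_1, …, b_{m−1}) is a ℤ-basis of ℤ^{m−1} (equivalently, the matrix with rows b_1, …, b_{m−1} has determinant ±1). -/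
theorem ker_aux (k : ℕ) (v : (Fin (k + 2) ⊕ Fin (k + 2)) → ℤ) :
    (Matrix.fromBlocks (1 : Matrix (Fin (k + 2)) (Fin (k + 2)) ℤ)
            (1 : Matrix (Fin (k + 2)) (Fin (k + 2)) ℤ)
            (0 : Matrix Unit (Fin (k + 2)) ℤ)
            (Matrix.of fun (_ : Unit) (_ : Fin (k + 2)) => (1 : ℤ))).mulVec v = 0 ↔
    (∀ j, v (Sum.inr j) = - v (Sum.inl j)) ∧ ∑ j, v (Sum.inl j) = 0 := by
  rw [Matrix.fromBlocks_mulVec, funext_iff]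
  simp only [Sum.forall, Sum.elim_inl, Sum.elim_inr, Matrix.one_mulVec, Matrix.zero_mulVec,
    Pi.add_apply, Pi.zero_apply, Function.comp_apply, zero_add]
  have e : ∀ u : Unit, ((Matrix.of fun (_ : Unit) (_ : Fin (k + 2)) => (1 : ℤ)).mulVec
      (v ∘ Sum.inr)) u = ∑ j, v (Sum.inr j) := by
    intro u
    simp [Matrix.mulVec, dotProduct]
  simp only [e]
  constructor
  · rintro ⟨h1, h2⟩
    have h3 : ∀ j, v (Sum.inr j) = - v (Sum.inl j) := fun j => by linarith [h1 j]
    refine ⟨h3, ?_⟩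
    have := h2 ()
    simp only [h3, Finset.sum_neg_distrib] at this
    linarith
  · rintro ⟨h3, h2⟩
    refine ⟨fun j => by rw [h3]; ring, fun _ => ?_⟩
    simp only [h3, Finset.sum_neg_distrib, h2, neg_zero]

/-- Lemma 5.6: Gale-dual characterization of the Segre configuration
`A' = [[Id_m, Id_m],[0…0, 1…1]]` with `m = k + 2 ≥ 2`: a matrix `B ∈ ℤ^{2m×(m-1)}` has
columns forming a ℤ-basis of `ker_ℤ(A')` iff `b_{m+j} = -b_j`, `b_1 + ⋯ + b_m = 0` and
the matrix with rows `b_1, …, b_{m-1}` has determinant `±1`. -/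
theorem stmt13 (k : ℕ) (B : Matrix (Fin (k + 2) ⊕ Fin (k + 2)) (Fin (k + 1)) ℤ) :
    ((∀ c : Fin (k + 1) → ℤ, B.mulVec c = 0 → c = 0) ∧
      ∀ v : (Fin (k + 2) ⊕ Fin (k + 2)) → ℤ,
        (Matrix.fromBlocks (1 : Matrix (Fin (k + 2)) (Fin (k + 2)) ℤ)
            (1 : Matrix (Fin (k + 2)) (Fin (k + 2)) ℤ)
            (0 : Matrix Unit (Fin (k + 2)) ℤ)
            (Matrix.of fun (_ : Unit) (_ : Fin (k + 2)) => (1 : ℤ))).mulVec v = 0 ↔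
          ∃ c : Fin (k + 1) → ℤ, v = B.mulVec c) ↔
    ((∀ (j : Fin (k + 2)) (t : Fin (k + 1)), B (Sum.inr j) t = - B (Sum.inl j) t) ∧
      (∀ t : Fin (k + 1), ∑ j : Fin (k + 2), B (Sum.inl j) t = 0) ∧
      ((Matrix.of fun (i t : Fin (k + 1)) => B (Sum.inl i.castSucc) t).det = 1 ∨
        (Matrix.of fun (i t : Fin (k + 1)) => B (Sum.inl i.castSucc) t).det = -1)) := by
  simp only [ker_aux]
  set M : Matrix (Fin (k + 1)) (Fin (k + 1)) ℤ :=
    Matrix.of fun (i t : Fin (k + 1)) => B (Sum.inl i.castSucc) t with hM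
  have hMv : ∀ c i, M.mulVec c i = B.mulVec c (Sum.inl i.castSucc) := fun c i => rfl
  rw [← Int.isUnit_iff, ← Matrix.isUnit_iff_isUnit_det]
  constructor
  · rintro ⟨-, h⟩
    have hc := fun t => (h (B.mulVec (Pi.single t 1))).2 ⟨_, rfl⟩
    simp only [Matrix.mulVec_single_one, Matrix.col_apply] at hc
    refine ⟨fun j t => (hc t).1 j, fun t => (hc t).2, ?_⟩
    rw [← Matrix.mulVec_surjective_iff_isUnit]
    intro w
    let u : Fin (k + 2) → ℤ := Fin.snoc w (-∑ i, w i)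
    obtain ⟨c, hc⟩ := (h (Sum.elim u (-u))).1 ⟨fun j => rfl, by
      simp [u, Fin.sum_univ_castSucc]⟩
    refine ⟨c, ?_⟩
    ext i
    rw [hMv, ← hc]
    simp [u]
  · rintro ⟨h1, h2, h3⟩
    have hk : ∀ c, (∀ j, B.mulVec c (Sum.inr j) = - B.mulVec c (Sum.inl j)) ∧
        ∑ j, B.mulVec c (Sum.inl j) = 0 := by
      intro c
      refine ⟨fun j => ?_, ?_⟩
      · simp only [Matrix.mulVec, dotProduct, h1, neg_mul, Finset.sum_neg_distrib]
      · simp only [Matrix.mulVec, dotProduct]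
        rw [Finset.sum_comm]
        simp only [← Finset.sum_mul, h2, zero_mul, Finset.sum_const_zero]
    refine ⟨fun c hc => ?_, fun v => ⟨?_, ?_⟩⟩
    · apply Matrix.mulVec_injective_of_isUnit h3
      ext i
      rw [hMv, hc, Matrix.mulVec_zero]
      rfl
    · rintro ⟨v1, v2⟩
      obtain ⟨c, hc⟩ := Matrix.mulVec_surjective_iff_isUnit.2 h3 (fun i => v (Sum.inl i.castSucc))
      obtain ⟨k1, k2⟩ := hk c
      have hi : ∀ i : Fin (k + 1), v (Sum.inl i.castSucc) = B.mulVec c (Sum.inl i.castSucc) :=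
        fun i => by rw [← hMv, hc]
      have hl : ∀ j, v (Sum.inl j) = B.mulVec c (Sum.inl j) := by
        intro j
        refine Fin.lastCases ?_ hi j
        rw [Fin.sum_univ_castSucc] at v2 k2
        simp only [hi] at v2
        linarith
      refine ⟨c, ?_⟩
      ext (j | j)
      · exact hl j
      · rw [v1, k1, hl]
    · rintro ⟨c, rfl⟩
      exact hk c
end

section
/- Let k be an algebraically closed field of characteristic 0. Let B ∈ ℤ^{n×m} be a matrix with entries b_{ji} (j = 1, …, n; i = 1, …, m) whose rows b_1, …, b_n ∈ ℤ^m are all nonzero. Then the following are equivalent: (I) for every i ∈ {1, …, m} and every s ∈ k^m, ∏_{j : b_{ji} > 0} ⟨s, b_j⟩^{b_{ji}} = ∏_{j : b_{ji} < 0} ⟨s, b_j⟩^{−b_{ji}}, where ⟨s, b_j⟩ = Σ_{t=1}^m s_t·b_{jt} ∈ k (with the integer entries cast into k); (II) both (a) for every 1-dimensional linear subspace L of ℚ^m, Σ_{j : b_j ∈ L} b_j = 0, and (b) for every i ∈ {1, …, m}, ∏_{j : b_{ji} > 0} b_{ji}^{b_{ji}} = ∏_{j : b_{ji} < 0} b_{ji}^{−b_{ji}}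 as integers. (This is the criterion of Theorem 6.3: for a non pyramidal regular configuration A with Gale dual B, conditions (a) and (b) characterize when the toric variety X_A is strongly self-dual.) -/
open scoped Classical

lemma aux_split {n : ℕ} (b : Fin n → ℤ) (p : Fin n → Prop) [DecidablePred p] :
    ∑ j, (if p j then b j else 0) =
      ((∑ j ∈ Finset.univ.filter (fun j => 0 < b j), (if p j then (b j).toNat else 0) : ℕ) : ℤ)
      - ((∑ j ∈ Finset.univ.filter (fun j => b j < 0), (if p j then (-(b j)).toNat else 0) : ℕ) : ℤ) := by
  rw [Finset.sum_filter, Finset.sum_filter]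
  push_cast
  rw [← Finset.sum_sub_distrib]
  refine Finset.sum_congr rfl fun j _ => ?_
  split_ifs <;> omega

lemma aux_emult {ι : Type*} (S : Finset ι) (P : ι → Polynomial ℚ) (e : ι → ℕ) (p : ι → Prop)
    (hP : ∀ j, emultiplicity Polynomial.X (P j) = if p j then 1 else 0) :
    emultiplicity Polynomial.X (∏ j ∈ S, P j ^ e j) =
      ((∑ j ∈ S, (if p j then e j else 0) : ℕ) : ℕ∞) := by
  rw [Finset.emultiplicity_prod Polynomial.prime_X]
  push_cast
  refine Finset.sum_congr rfl fun j _ => ?_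
  rw [emultiplicity_pow Polynomial.prime_X, hP]
  split_ifs <;> simp

lemma aux_exists {n m : ℕ} (b : Fin n → Fin m → ℚ) (v : Fin m → ℚ) :
    ∃ s : Fin m → ℚ, s ⬝ᵥ v = 0 ∧ ∀ j, b j ∉ Submodule.span ℚ {v} → s ⬝ᵥ b j ≠ 0 := by
  by_cases hv : v = 0
  · subst hv
    obtain ⟨s, hs⟩ := Module.Dual.exists_forall_ne_zero_of_forall_exists (K := ℚ) (M := Fin m → ℚ)
      (fun j : {j // b j ∉ Submodule.span ℚ {(0 : Fin m → ℚ)}} => dotProductBilin ℚ ℚ (b j)) (by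
        rintro ⟨j, hj⟩
        refine ⟨b j, ?_⟩
        simpa [dotProduct_self_eq_zero] using hj)
    refine ⟨s, by simp, fun j hj => ?_⟩
    have := hs ⟨j, hj⟩
    rw [dotProduct_comm]
    simpa using this
  obtain ⟨s, hs0, hs⟩ := Module.Dual.exists_forall_mem_ne_zero_of_forall_exists (K := ℚ)
      (M := Fin m → ℚ) (LinearMap.ker (dotProductBilin ℚ ℚ v))
      (fun j : {j // b j ∉ Submodule.span ℚ {v}} => dotProductBilin ℚ ℚ (b j)) (by
        rintro ⟨j, hj⟩
        have hvv : v ⬝ᵥ v ≠ 0 := by simpa [dotProduct_self_eq_zero] using hv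
        have h1 : v ⬝ᵥ ((v ⬝ᵥ v) • b j - (v ⬝ᵥ b j) • v) = 0 := by
          simp only [dotProduct_sub, dotProduct_smul, smul_eq_mul]; ring
        refine ⟨(v ⬝ᵥ v) • b j - (v ⬝ᵥ b j) • v, by simpa using h1, ?_⟩
        intro h2
        replace h2 : b j ⬝ᵥ ((v ⬝ᵥ v) • b j - (v ⬝ᵥ b j) • v) = 0 := by simpa using h2
        have h3 : ((v ⬝ᵥ v) • b j - (v ⬝ᵥ b j) • v) ⬝ᵥ ((v ⬝ᵥ v) • b j - (v ⬝ᵥ b j) • v) = 0 := by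
          conv_lhs => rw [sub_dotProduct, smul_dotProduct, smul_dotProduct, h1, h2]
          simp
        rw [dotProduct_self_eq_zero, sub_eq_zero] at h3
        apply hj
        rw [Submodule.mem_span_singleton]
        refine ⟨(v ⬝ᵥ v)⁻¹ * (v ⬝ᵥ b j), ?_⟩
        rw [mul_smul, ← h3, smul_smul, inv_mul_cancel₀ hvv, one_smul])
  refine ⟨s, ?_, fun j hj => ?_⟩
  · rw [dotProduct_comm]; simpa using hs0
  · have := hs ⟨j, hj⟩
    rw [dotProduct_comm]
    simpa using this

lemma aux_forward (K : Type) [Field K] [CharZero K]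
    (n m : ℕ) (B : Matrix (Fin n) (Fin m) ℤ) (hrows : ∀ j : Fin n, B j ≠ 0) (i : Fin m)
    (H : ∀ s : Fin m → K,
        ∏ j ∈ Finset.univ.filter (fun j : Fin n => 0 < B j i),
            (∑ t, s t * (B j t : K)) ^ (B j i).toNat =
          ∏ j ∈ Finset.univ.filter (fun j : Fin n => B j i < 0),
            (∑ t, s t * (B j t : K)) ^ (-(B j i)).toNat)
    (L : Submodule ℚ (Fin m → ℚ)) (hL : Module.finrank ℚ L = 1) :
    ∑ j, (if (fun t => (B j t : ℚ)) ∈ L then B j i else 0) = 0 := by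
  set b : Fin n → Fin m → ℚ := fun j t => (B j t : ℚ) with hb
  obtain ⟨⟨v, hvL⟩, hv0, hv⟩ := finrank_eq_one_iff'.1 hL
  have hv0' : v ≠ 0 := fun h => hv0 (by simpa using h)
  have hvv : v ⬝ᵥ v ≠ 0 := by simpa [dotProduct_self_eq_zero] using hv0'
  have hLs : ∀ w, w ∈ L → ∃ c : ℚ, c • v = w := fun w hw => by
    obtain ⟨c, hc⟩ := hv ⟨w, hw⟩
    exact ⟨c, by simpa using congrArg Subtype.val hc⟩
  obtain ⟨s, hsv, hs⟩ := aux_exists b v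
  have hs' : ∀ j, b j ∉ L → s ⬝ᵥ b j ≠ 0 := fun j hj => hs j fun h => hj (by
    obtain ⟨c, hc⟩ := Submodule.mem_span_singleton.1 h
    rw [← hc]; exact L.smul_mem _ hvL)
  let P : Fin n → Polynomial ℚ := fun j =>
    Polynomial.C (s ⬝ᵥ b j) + Polynomial.X * Polynomial.C (v ⬝ᵥ b j)
  have hP : ∀ j, emultiplicity Polynomial.X (P j) = if b j ∈ L then 1 else 0 := by
    intro j
    split_ifs with hj
    · obtain ⟨c, hc⟩ := hLs _ hj
      have hc0 : c ≠ 0 := by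
        rintro rfl
        apply hrows j
        ext t
        have := congrFun hc t
        simp only [zero_smul, Pi.zero_apply, hb] at this
        exact_mod_cast this.symm
      have e1 : s ⬝ᵥ b j = 0 := by rw [← hc, dotProduct_smul, hsv, smul_zero]
      have e2 : v ⬝ᵥ b j ≠ 0 := by
        rw [← hc, dotProduct_smul]; exact mul_ne_zero hc0 hvv
      rw [← Nat.cast_one (R := ℕ∞), emultiplicity_eq_coe]
      simp only [P, e1, map_zero, zero_add]
      constructor
      · rw [pow_one]; exact dvd_mul_right _ _
      · rw [Polynomial.X_pow_dvd_iff]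
        intro h
        have := h 1 (by norm_num)
        simp at this
        exact e2 this
    · rw [emultiplicity_eq_zero, Polynomial.X_dvd_iff]
      simpa [P] using hs' j hj
  have key : ∏ j ∈ Finset.univ.filter (fun j : Fin n => 0 < B j i), P j ^ (B j i).toNat =
      ∏ j ∈ Finset.univ.filter (fun j : Fin n => B j i < 0), P j ^ (-(B j i)).toNat := by
    apply Polynomial.funext
    intro x
    have hh := H (fun t => ((s t + x * v t : ℚ) : K))
    have e : ∀ j, ∑ t, ((s t + x * v t : ℚ) : K) * (B j t : K) = (((P j).eval x : ℚ) : K) := by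
      intro j
      simp only [P, dotProduct, hb, Polynomial.eval_add, Polynomial.eval_mul, Polynomial.eval_C,
        Polynomial.eval_X, Finset.mul_sum, ← Finset.sum_add_distrib]
      push_cast
      refine Finset.sum_congr rfl fun t _ => ?_
      ring
    simp only [e] at hh
    simp only [Polynomial.eval_prod, Polynomial.eval_pow]
    exact_mod_cast hh
  have := congrArg (emultiplicity Polynomial.X) key
  rw [aux_emult _ P _ _ hP, aux_emult _ P _ _ hP, Nat.cast_inj] at this
  rw [aux_split (fun j => B j i), this, sub_self]

lemma aux_back (K : Type) [Field K] [CharZero K]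
    (n m : ℕ) (B : Matrix (Fin n) (Fin m) ℤ) (i : Fin m)
    (Ha : ∀ L : Submodule ℚ (Fin m → ℚ), Module.finrank ℚ L = 1 →
      ∑ j, (if (fun t => (B j t : ℚ)) ∈ L then B j i else 0) = 0)
    (Hb : ∏ j ∈ Finset.univ.filter (fun j : Fin n => 0 < B j i), (B j i) ^ (B j i).toNat =
          ∏ j ∈ Finset.univ.filter (fun j : Fin n => B j i < 0),
            (B j i) ^ (-(B j i)).toNat) (s : Fin m → K) :
        ∏ j ∈ Finset.univ.filter (fun j : Fin n => 0 < B j i),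
            (∑ t, s t * (B j t : K)) ^ (B j i).toNat =
          ∏ j ∈ Finset.univ.filter (fun j : Fin n => B j i < 0),
            (∑ t, s t * (B j t : K)) ^ (-(B j i)).toNat := by
  let f : Fin n → Fin m → ℚ := fun j t => (B j t : ℚ) / (B j i : ℚ)
  let g : (Fin m → ℚ) → K := fun w => ∑ t, s t * (w t : K)
  have hg : ∀ j, B j i ≠ 0 → ∑ t, s t * (B j t : K) = (B j i : K) * g (f j) := by
    intro j hj
    have : (B j i : K) ≠ 0 := by exact_mod_cast hj
    simp only [g, f, Finset.mul_sum]
    refine Finset.sum_congr rfl fun t _ => ?_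
    push_cast
    field_simp
  have h1 : ∏ j ∈ Finset.univ.filter (fun j : Fin n => 0 < B j i),
            (∑ t, s t * (B j t : K)) ^ (B j i).toNat =
      (∏ j ∈ Finset.univ.filter (fun j : Fin n => 0 < B j i), (B j i : K) ^ (B j i).toNat) *
      ∏ j ∈ Finset.univ.filter (fun j : Fin n => 0 < B j i), g (f j) ^ (B j i).toNat := by
    rw [← Finset.prod_mul_distrib]
    refine Finset.prod_congr rfl fun j hj => ?_
    rw [hg j (by simpa using (Finset.mem_filter.1 hj).2.ne'), mul_pow]
  have h2 : ∏ j ∈ Finset.univ.filter (fun j : Fin n => B j i < 0),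
            (∑ t, s t * (B j t : K)) ^ (-(B j i)).toNat =
      (∏ j ∈ Finset.univ.filter (fun j : Fin n => B j i < 0), (B j i : K) ^ (-(B j i)).toNat) *
      ∏ j ∈ Finset.univ.filter (fun j : Fin n => B j i < 0), g (f j) ^ (-(B j i)).toNat := by
    rw [← Finset.prod_mul_distrib]
    refine Finset.prod_congr rfl fun j hj => ?_
    rw [hg j (by simpa using (Finset.mem_filter.1 hj).2.ne), mul_pow]
  have h3 : ∏ j ∈ Finset.univ.filter (fun j : Fin n => 0 < B j i), (B j i : K) ^ (B j i).toNat =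
      ∏ j ∈ Finset.univ.filter (fun j : Fin n => B j i < 0), (B j i : K) ^ (-(B j i)).toNat := by
    exact_mod_cast congrArg (Int.cast : ℤ → K) Hb
  have fib : ∀ (S : Finset (Fin n)) (e : Fin n → ℕ), ∏ j ∈ S, g (f j) ^ e j =
      ∏ w ∈ Finset.univ.image f, g w ^ (∑ j ∈ S, if f j = w then e j else 0) := by
    intro S e
    rw [← Finset.prod_fiberwise_of_maps_to (s := S) (t := Finset.univ.image f) (g := f)
      (fun j _ => Finset.mem_image_of_mem _ (Finset.mem_univ _))]
    refine Finset.prod_congr rfl fun w _ => ?_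
    rw [← Finset.sum_filter, ← Finset.prod_pow_eq_pow_sum]
    refine Finset.prod_congr rfl fun j hj => ?_
    rw [(Finset.mem_filter.1 hj).2]
  rw [h1, h2, h3, fib, fib]
  congr 1
  refine Finset.prod_congr rfl fun w hw => ?_
  congr 1
  have hz : ∑ j, (if f j = w then B j i else 0) = 0 := by
    by_cases hwi : w i = 1
    · have hw0 : w ≠ 0 := fun h => by simp [h] at hwi
      refine Eq.trans ?_ (Ha (Submodule.span ℚ {w}) (finrank_span_singleton hw0))
      refine Finset.sum_congr rfl fun j _ => ?_
      by_cases hj : B j i = 0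
      · simp [hj]
      have hjq : (B j i : ℚ) ≠ 0 := by exact_mod_cast hj
      refine if_congr ?_ rfl rfl
      rw [Submodule.mem_span_singleton]
      constructor
      · rintro rfl
        refine ⟨B j i, ?_⟩
        ext t
        simp only [f, Pi.smul_apply, smul_eq_mul]
        field_simp
      · rintro ⟨c, hc⟩
        have hci := congrFun hc i
        simp only [Pi.smul_apply, smul_eq_mul, hwi, mul_one] at hci
        ext t
        have hct := congrFun hc t
        simp only [Pi.smul_apply, smul_eq_mul] at hct
        simp only [f]
        rw [← hct, hci]
        field_simp
    · refine Finset.sum_eq_zero fun j _ => ?_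
      split_ifs with h
      · by_contra hj
        apply hwi
        have hjq : (B j i : ℚ) ≠ 0 := by exact_mod_cast hj
        rw [← h]
        simp only [f]
        exact div_self hjq
      · rfl
  rw [aux_split (fun j => B j i), sub_eq_zero] at hz
  exact_mod_cast hz

/-- Theorem 6.3: for an integer matrix `B` with nonzero rows `b_j`, the
polynomial identities `∏_{b_{ji}>0} ⟨s,b_j⟩^{b_{ji}} = ∏_{b_{ji}<0} ⟨s,b_j⟩^{-b_{ji}}`
(for all `s` in an algebraically closed field `K` of characteristic 0) hold iff the
line-sum criterion (a) and the integer product condition (b) hold. -/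
theorem stmt14 (K : Type) [Field K] [IsAlgClosed K] [CharZero K]
    (n m : ℕ) (B : Matrix (Fin n) (Fin m) ℤ)
    (hrows : ∀ j : Fin n, B j ≠ 0) :
    (∀ (i : Fin m) (s : Fin m → K),
        ∏ j ∈ Finset.univ.filter (fun j : Fin n => 0 < B j i),
            (∑ t, s t * (B j t : K)) ^ (B j i).toNat =
          ∏ j ∈ Finset.univ.filter (fun j : Fin n => B j i < 0),
            (∑ t, s t * (B j t : K)) ^ (-(B j i)).toNat) ↔
    ((∀ L : Submodule ℚ (Fin m → ℚ), Module.finrank ℚ L = 1 →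
        ∑ j ∈ Finset.univ.filter (fun j : Fin n => (fun t => (B j t : ℚ)) ∈ L),
          (fun t => (B j t : ℚ)) = (0 : Fin m → ℚ)) ∧
      ∀ i : Fin m,
        ∏ j ∈ Finset.univ.filter (fun j : Fin n => 0 < B j i), (B j i) ^ (B j i).toNat =
          ∏ j ∈ Finset.univ.filter (fun j : Fin n => B j i < 0),
            (B j i) ^ (-(B j i)).toNat) := by
  have conv : ∀ (L : Submodule ℚ (Fin m → ℚ)),
      (∑ j ∈ Finset.univ.filter (fun j : Fin n => (fun t => (B j t : ℚ)) ∈ L),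
          (fun t => (B j t : ℚ)) = (0 : Fin m → ℚ)) ↔
      ∀ i, ∑ j, (if (fun t => (B j t : ℚ)) ∈ L then B j i else 0) = 0 := by
    intro L
    rw [funext_iff]
    refine forall_congr' fun i => ?_
    rw [Finset.sum_apply, Finset.sum_filter, Pi.zero_apply]
    rw [← Int.cast_inj (α := ℚ)]
    push_cast
    rfl
  constructor
  · intro H
    refine ⟨fun L hL => (conv L).2 fun i => aux_forward K n m B hrows i (H i) L hL, fun i => ?_⟩
    have := H i (Pi.single i 1)
    simp only [Pi.single_apply, ite_mul, one_mul, zero_mul, Finset.sum_ite_eq',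
      Finset.mem_univ, if_true] at this
    exact_mod_cast this
  · rintro ⟨Ha, Hb⟩ i s
    exact aux_back K n m B i (fun L hL => (conv L).1 (Ha L hL) i) (Hb i) s
end

section
/- Let M = (m_{jk}) ∈ ℤ^{d×n} be an integer matrix whose columns span ℤ^d. Then every v ∈ ker_ℤ(M) satisfies Σ_{k=1}^n v_k ≡ 0 (mod 2) if and only if there exists a subset I ⊆ {1, …, d} of the rows of M such that Σ_{j∈I} m_{jk} is odd for every k = 1, …, n. (This is the combinatorial core of Theorem 6.5: for a non pyramidal Lawrence configuration built from M, the associated toric variety is strongly self-dual exactly under this condition.) -/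
/-- core of Theorem 6.5: for `M ∈ ℤ^{d×n}` with columns spanning `ℤ^d`,
every integer relation of `M` has even coordinate sum iff some subset `I` of the rows of
`M` has odd column sums `Σ_{j∈I} m_{jk}` for every `k`. -/
theorem stmt15 (d n : ℕ) (M : Matrix (Fin d) (Fin n) ℤ)
    (hspan : Submodule.span ℤ (Set.range fun k : Fin n => fun r : Fin d => M r k) =
      (⊤ : Submodule ℤ (Fin d → ℤ))) :
    (∀ v : Fin n → ℤ, M.mulVec v = 0 → 2 ∣ ∑ k, v k) ↔
      ∃ I : Finset (Fin d), ∀ k : Fin n, Odd (∑ j ∈ I, M j k) := by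
  classical
  constructor
  · intro h
    have hs : ∀ j : Fin d, ∃ s : Fin n → ℤ, M.mulVec s = Pi.single j 1 := by
      intro j
      have hj : (Pi.single j 1 : Fin d → ℤ) ∈
          Submodule.span ℤ (Set.range fun k : Fin n => fun r : Fin d => M r k) := by
        rw [hspan]; trivial
      obtain ⟨c, hc⟩ := (Submodule.mem_span_range_iff_exists_fun ℤ).1 hj
      refine ⟨c, ?_⟩
      rw [← hc]
      ext r
      simp [Matrix.mulVec, dotProduct, Finset.sum_apply, mul_comm]
    choose s hs using hs
    refine ⟨Finset.univ.filter fun j => Odd (∑ k, s j k), fun k => ?_⟩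
    have h1 := h (Pi.single k 1 - ∑ j, M j k • s j) (by
      rw [Matrix.mulVec_sub, Matrix.mulVec_sum]
      simp only [Matrix.mulVec_smul, hs]
      ext r
      simp [Finset.sum_apply, Pi.single_apply])
    have h2 : ∑ l, (Pi.single k 1 - ∑ j, M j k • s j : Fin n → ℤ) l
        = 1 - ∑ j, M j k * ∑ l, s j l := by
      simp only [Pi.sub_apply, Finset.sum_sub_distrib, Finset.sum_apply, Pi.smul_apply,
        smul_eq_mul, Finset.mul_sum]
      rw [Finset.sum_comm]
      simp
    have h3 : (2 : ℤ) ∣ ∑ j, M j k * (∑ l, s j l)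
        - ∑ j ∈ Finset.univ.filter (fun j => Odd (∑ k, s j k)), M j k := by
      rw [Finset.sum_filter, ← Finset.sum_sub_distrib]
      refine Finset.dvd_sum fun j _ => ?_
      split_ifs with ho
      · obtain ⟨c, hc⟩ := ho
        exact ⟨M j k * c, by rw [hc]; ring⟩
      · obtain ⟨c, hc⟩ := Int.not_odd_iff_even.1 ho
        exact ⟨M j k * c, by rw [hc]; ring⟩
    rw [h2] at h1
    rw [Int.odd_iff]
    omega
  · rintro ⟨I, hI⟩ v hv
    have h0 : ∑ k, v k * ∑ j ∈ I, M j k = 0 := by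
      simp only [Finset.mul_sum]
      rw [Finset.sum_comm]
      refine Finset.sum_eq_zero fun j _ => ?_
      have := congrFun hv j
      simpa [Matrix.mulVec, dotProduct, mul_comm] using this
    have h1 : (2 : ℤ) ∣ ∑ k, v k * (∑ j ∈ I, M j k) - ∑ k, v k := by
      rw [← Finset.sum_sub_distrib]
      refine Finset.dvd_sum fun k _ => ?_
      obtain ⟨c, hc⟩ := hI k
      exact ⟨v k * c, by rw [hc]; ring⟩
    omega
end
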